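/- arXiv:math/0010020 — 6 statements merged into one kernel-verified Lean document; each statement's English description precedes it below -/
import Mathlib

section
/- Let z_o be a 6-vector of the rank-10 𝒪-lattice Λ = Λ′ ⊥ Λ″ ⊥ H_𝒪 and let Λ_o := {x ∈ Λ : ψ(x, z_o) = 0} be its orthogonal complement, an 𝒪-lattice of rank 9 with the restricted form. Then the restriction homomorphism from the stabilizer {g ∈ U(Λ) : g(Λ_o) = Λ_o} to the unitary group U(Λ_o) is a group isomorphism; in particular, every ψ-unitary 𝒪-module automorphism of Λ_o extends uniquely to a ψ-unitary automorphism of Λ. -/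
open Polynomial

noncomputable section

/-- The Eisenstein ring `𝒪 = ℤ[ω]`, where `ω = e^{2πi/6}` is a primitive sixth root of
unity (so `ω² - ω + 1 = 0`), presented as `ℤ[X]/(X² - X + 1)`. -/
abbrev O : Type := AdjoinRoot (X ^ 2 - X + 1 : ℤ[X])

/-- `ω`, the distinguished primitive sixth root of unity in `𝒪`. -/
def ω : O := AdjoinRoot.root _

lemma ω_sq : ω ^ 2 - ω + 1 = 0 := by
  have h := AdjoinRoot.eval₂_root (X ^ 2 - X + 1 : ℤ[X])
  simpa [ω, eval₂_add, eval₂_sub, eval₂_pow, eval₂_X, eval₂_one] using h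

/-- Complex conjugation on the Eisenstein ring: the ring involution with
`conj ω = 1 - ω = ω⁻¹`. -/
def conj : O →+* O :=
  AdjoinRoot.lift (algebraMap ℤ O) (1 - ω) (by
    have h := ω_sq
    simp only [eval₂_add, eval₂_sub, eval₂_pow, eval₂_X, eval₂_one]
    ring_nf
    ring_nf at h
    linear_combination h)

/-- `θ := ω - ω⁻¹ = ω - conj ω = 2ω - 1`, a square root of `-3` in `𝒪`. -/
def θ : O := ω - conj ω

/-- The rank-10 𝒪-lattice `Λ = Λ′ ⊥ Λ″ ⊥ H_𝒪`, modelled on `Fin 10 → 𝒪`.  The basis is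
`(r₁′, …, r₄′, r₁″, …, r₄″, e, f)` (coordinates `0–3`, `4–7`, `8`, `9`).  This is the Gram
matrix: on each copy of `Λ⁴` (coordinates `0–3` and `4–7`) we have `ψ(rᵢ,rᵢ) = 3`,
`ψ(rᵢ,rᵢ₊₁) = θ`, `ψ(rᵢ,rⱼ) = 0` for `j > i+1`; the two copies and `H_𝒪` are mutually
orthogonal; and on `H_𝒪` we have `ψ(e,e) = ψ(f,f) = 0`, `ψ(e,f) = θ`, `ψ(f,e) = −θ`. -/
def gram10 : Fin 10 → Fin 10 → O := fun i j =>
  if (i : ℕ) < 8 ∧ (j : ℕ) < 8 then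
    (if (i : ℕ) / 4 = (j : ℕ) / 4 then
      (if i = j then 3
       else if (i : ℕ) + 1 = (j : ℕ) then θ
       else if (j : ℕ) + 1 = (i : ℕ) then conj θ
       else 0)
     else 0)
  else if (i : ℕ) = 8 ∧ (j : ℕ) = 9 then θ
  else if (i : ℕ) = 9 ∧ (j : ℕ) = 8 then -θ
  else 0

/-- The Hermitian form of `Λ`: 𝒪-linear in the first variable, conjugate-linear in the
second; it has hyperbolic signature `(9,1)`. -/
def psi10 (x y : Fin 10 → O) : O :=
  ∑ i : Fin 10, ∑ j : Fin 10, x i * conj (y j) * gram10 i j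

/-- `g` belongs to the unitary group `U(Λ)`. -/
def IsUnitary10 (g : (Fin 10 → O) ≃ₗ[O] (Fin 10 → O)) : Prop :=
  ∀ x y, psi10 (g x) (g y) = psi10 x y

/-- The `i`-th basis vector of `Λ` (so `b 0, …, b 3` are `r₁′, …, r₄′`;
`b 4, …, b 7` are `r₁″, …, r₄″`; `b 8 = e` and `b 9 = f`). -/
def b (i : Fin 10) : Fin 10 → O := Pi.single i 1

/-- `x ∈ Λ` is primitive: `x ∉ λΛ` for every non-unit `λ ∈ 𝒪`. -/
def IsPrimVec (x : Fin 10 → O) : Prop :=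
  ∀ a : O, (∃ y : Fin 10 → O, x = a • y) → IsUnit a

/-- The Hermitian form paired against a fixed second argument, as an 𝒪-linear map. -/
def psiLin (z : Fin 10 → O) : (Fin 10 → O) →ₗ[O] O where
  toFun x := psi10 x z
  map_add' x y := by
    simp [psi10, add_mul, Finset.sum_add_distrib]
  map_smul' a x := by
    simp [psi10, smul_eq_mul, mul_assoc, Finset.mul_sum]

/-- `Λ_o`, the orthogonal complement `{x ∈ Λ : ψ(x, z_o) = 0}` of `z_o` in `Λ`. -/
def Λo (zo : Fin 10 → O) : Submodule O (Fin 10 → O) := LinearMap.ker (psiLin zo)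

/-! Coordinates on the Eisenstein ring -/

def toQ : O →+* QuadraticAlgebra ℤ (-1) 1 :=
  AdjoinRoot.lift (algebraMap ℤ _) (⟨0, 1⟩) (by
    simp only [eval₂_add, eval₂_sub, eval₂_pow, eval₂_X, eval₂_one]
    ext <;> simp [pow_two, QuadraticAlgebra.re_one, QuadraticAlgebra.im_one])

def cre (a : O) : ℤ := (toQ a).re
def cim (a : O) : ℤ := (toQ a).im

lemma toQ_ω : toQ ω = ⟨0, 1⟩ := by simp [toQ, ω]

lemma exists_coord (a : O) : ∃ m n : ℤ, a = (m : O) + (n : O) * ω := by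
  obtain ⟨p, rfl⟩ := AdjoinRoot.mk_surjective a
  induction p using Polynomial.induction_on with
  | C c => exact ⟨c, 0, by simp⟩
  | add p q hp hq =>
    obtain ⟨m, n, h1⟩ := hp
    obtain ⟨m', n', h2⟩ := hq
    refine ⟨m + m', n + n', ?_⟩
    rw [map_add, h1, h2]; push_cast; ring
  | monomial k c h =>
    obtain ⟨m, n, h1⟩ := h
    refine ⟨-n, m + n, ?_⟩
    have e : (AdjoinRoot.mk (X ^ 2 - X + 1 : ℤ[X])) (C c * X ^ (k + 1)) =
      (AdjoinRoot.mk (X ^ 2 - X + 1 : ℤ[X])) (C c * X ^ k) * ω := by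
      rw [ω, ← AdjoinRoot.mk_X, ← map_mul]; congr 1; ring
    rw [e, h1]; push_cast
    linear_combination (n : O) * ω_sq

lemma cre_coord (m n : ℤ) : cre ((m : O) + (n : O) * ω) = m := by
  simp [cre, toQ_ω]
lemma cim_coord (m n : ℤ) : cim ((m : O) + (n : O) * ω) = n := by
  simp [cim, toQ_ω]

lemma coord (a : O) : a = (cre a : O) + (cim a : O) * ω := by
  obtain ⟨m, n, rfl⟩ := exists_coord a
  rw [cre_coord, cim_coord]

lemma oext {a c : O} (h1 : cre a = cre c) (h2 : cim a = cim c) : a = c := by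
  rw [coord a, coord c, h1, h2]

lemma cre_add (a c : O) : cre (a + c) = cre a + cre c := by simp [cre]
lemma cim_add (a c : O) : cim (a + c) = cim a + cim c := by simp [cim]
lemma cre_sub (a c : O) : cre (a - c) = cre a - cre c := by simp [cre]
lemma cim_sub (a c : O) : cim (a - c) = cim a - cim c := by simp [cim]
lemma cre_neg (a : O) : cre (-a) = -cre a := by simp [cre]
lemma cim_neg (a : O) : cim (-a) = -cim a := by simp [cim]
lemma cre_mul (a c : O) : cre (a * c) = cre a * cre c - cim a * cim c := by
  simp [cre, cim]; ring
lemma cim_mul (a c : O) : cim (a * c) = cre a * cim c + cim a * cre c + cim a * cim c := by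
  simp [cre, cim]
lemma cre_int (m : ℤ) : cre (m : O) = m := by simpa using cre_coord m 0
lemma cim_int (m : ℤ) : cim (m : O) = 0 := by simpa using cim_coord m 0
lemma cre_zero : cre 0 = 0 := by simp [cre]
lemma cim_zero : cim 0 = 0 := by simp [cim]
lemma cre_one : cre 1 = 1 := by simp [cre, QuadraticAlgebra.re_one]
lemma cim_one : cim 1 = 0 := by simp [cim, QuadraticAlgebra.im_one]
lemma cre_two : cre 2 = 2 := by simpa using cre_int 2
lemma cim_two : cim 2 = 0 := by simpa using cim_int 2
lemma cre_six : cre 6 = 6 := by simpa using cre_int 6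
lemma cim_six : cim 6 = 0 := by simpa using cim_int 6

lemma conj_ω : conj ω = 1 - ω := by simp [conj, ω]
lemma conj_int (m : ℤ) : conj (m : O) = m := by simp
lemma θ_eq : θ = -1 + 2 * ω := by rw [θ, conj_ω]; ring
lemma cre_θ : cre θ = -1 := by
  rw [θ_eq]; simpa using cre_coord (-1) 2
lemma cim_θ : cim θ = 2 := by
  rw [θ_eq]; simpa using cim_coord (-1) 2
lemma θ_sq : θ * θ = -3 := by rw [θ_eq]; linear_combination 4 * ω_sq
lemma conj_θ : conj θ = -θ := by rw [θ_eq, map_add, map_mul, map_neg, map_one, conj_ω, show conj 2 = 2 from map_ofNat conj 2]; ring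
lemma conj_eq (a : O) : conj a = ((cre a + cim a : ℤ) : O) + ((-cim a : ℤ) : O) * ω := by
  conv_lhs => rw [coord a]
  simp only [map_add, map_mul, conj_int, conj_ω]; push_cast; ring
lemma cre_conj (a : O) : cre (conj a) = cre a + cim a := by rw [conj_eq, cre_coord]
lemma cim_conj (a : O) : cim (conj a) = -cim a := by rw [conj_eq, cim_coord]
lemma conj_conj (a : O) : conj (conj a) = a := by
  apply oext <;> simp [cre_conj, cim_conj]

def nm (a : O) : ℤ := cre a ^ 2 + cre a * cim a + cim a ^ 2
lemma nm_mul (a c : O) : nm (a * c) = nm a * nm c := by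
  simp only [nm, cre_mul, cim_mul]; ring
lemma nm_nonneg (a : O) : 0 ≤ nm a := by
  unfold nm; nlinarith [sq_nonneg (cre a + cim a), sq_nonneg (cre a), sq_nonneg (cim a)]
lemma nm_eq_zero {a : O} (h : nm a = 0) : a = 0 := by
  unfold nm at h
  have h1 : cre a ^ 2 = 0 := by
    nlinarith [sq_nonneg (cre a + cim a), sq_nonneg (cre a), sq_nonneg (cim a)]
  have h2 : cim a ^ 2 = 0 := by
    nlinarith [sq_nonneg (cre a + cim a), sq_nonneg (cre a), sq_nonneg (cim a)]
  apply oext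
  · rw [cre_zero]; exact pow_eq_zero_iff (two_ne_zero) |>.1 h1
  · rw [cim_zero]; exact pow_eq_zero_iff (two_ne_zero) |>.1 h2
lemma nm_zero : nm 0 = 0 := by simp [nm, cre_zero, cim_zero]
lemma nm_θ : nm θ = 3 := by simp [nm, cre_θ, cim_θ]
lemma nm_two : nm 2 = 4 := by simp [nm, cre_two, cim_two]
lemma nm_six : nm 6 = 36 := by simp [nm, cre_six, cim_six]
lemma nm_one : nm 1 = 1 := by simp [nm, cre_one, cim_one]
lemma mul_conj_eq (a : O) : a * conj a = (nm a : O) := by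
  apply oext
  · simp only [cre_mul, cre_conj, cim_conj, cre_int, nm]; ring
  · simp only [cim_mul, cre_conj, cim_conj, cim_int, nm]; ring

lemma omul_eq_zero {a c : O} (h : a * c = 0) (ha : nm a ≠ 0) : c = 0 := by
  have := nm_mul a c
  rw [h, nm_zero] at this
  rcases mul_eq_zero.1 this.symm with h | h
  · exact absurd h ha
  · exact nm_eq_zero h

lemma ocancel {a c d : O} (ha : nm a ≠ 0) (h : a * c = a * d) : c = d := by
  have : a * (c - d) = 0 := by rw [mul_sub, h, sub_self]
  exact sub_eq_zero.1 (omul_eq_zero this ha)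

lemma vcancel {a : O} {c d : Fin 10 → O} (ha : nm a ≠ 0) (h : a • c = a • d) : c = d := by
  funext i
  exact ocancel ha (by simpa using congrFun h i)

lemma nm_tθ : nm (2 * θ) ≠ 0 := by rw [nm_mul, nm_two, nm_θ]; norm_num
lemma nm_θ' : nm θ ≠ 0 := by rw [nm_θ]; norm_num

lemma int_lift (m n : ℤ) (h2 : ¬ (2 ∣ m ^ 2 + m * n + n ^ 2)) (h3 : ¬ (3 ∣ m ^ 2 + m * n + n ^ 2)) :
    ∃ p q x y : ℤ, p ^ 2 + p * q + q ^ 2 = 1 ∧ m = p + (-2 * x - 4 * y) ∧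
      n = q + (4 * x + 2 * y) := by
  have h2' : ¬ (m % 2 = 0 ∧ n % 2 = 0) := by
    rintro ⟨h, h'⟩
    obtain ⟨i, rfl⟩ := Int.dvd_of_emod_eq_zero h
    obtain ⟨j, rfl⟩ := Int.dvd_of_emod_eq_zero h'
    exact h2 ⟨2 * i ^ 2 + 2 * i * j + 2 * j ^ 2, by ring⟩
  have h3' : ¬ ((m - n) % 3 = 0) := by
    intro h
    obtain ⟨i, hi⟩ := Int.dvd_of_emod_eq_zero h
    obtain rfl : m = n + 3 * i := by omega
    exact h3 ⟨3 * i ^ 2 + 3 * i * n + n ^ 2, by ring⟩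
  have key : ∀ p q : ℤ, p ^ 2 + p * q + q ^ 2 = 1 → (m - p) % 2 = 0 → (n - q) % 2 = 0 →
      (m - n - (p - q)) % 3 = 0 → ∃ p q x y : ℤ, p ^ 2 + p * q + q ^ 2 = 1 ∧
        m = p + (-2 * x - 4 * y) ∧ n = q + (4 * x + 2 * y) := by
    intro p q h a1 a2 a3
    refine ⟨p, q, ((m - p) + 2 * (n - q)) / 6, - ((2 * (m - p) + (n - q)) / 6), h, ?_, ?_⟩ <;> omega
  rcases Int.emod_two_eq_zero_or_one m with hm | hm <;>
  rcases Int.emod_two_eq_zero_or_one n with hn | hn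
  · exact absurd ⟨hm, hn⟩ h2'
  · by_cases hd : (m - n) % 3 = 1
    · exact key 0 (-1) (by norm_num) (by omega) (by omega) (by omega)
    · exact key 0 1 (by norm_num) (by omega) (by omega) (by omega)
  · by_cases hd : (m - n) % 3 = 1
    · exact key 1 0 (by norm_num) (by omega) (by omega) (by omega)
    · exact key (-1) 0 (by norm_num) (by omega) (by omega) (by omega)
  · by_cases hd : (m - n) % 3 = 1
    · exact key (-1) 1 (by norm_num) (by omega) (by omega) (by omega)
    · exact key 1 (-1) (by norm_num) (by omega) (by omega) (by omega)

/-- lifting units modulo `2θ` -/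
lemma unit_lift (a a' c : O) (h : 1 - a * a' = 2 * θ * c) :
    ∃ ε d : O, ε * conj ε = 1 ∧ a = ε + 2 * θ * d := by
  have hN : nm a * nm a' = nm (1 - 2 * θ * c) := by
    rw [← nm_mul]; congr 1; linear_combination -h
  have hN2 : ∃ k : ℤ, nm (1 - 2 * θ * c) = 1 + 6 * k := by
    simp only [nm, cre_sub, cim_sub, cre_mul, cim_mul, cre_one, cim_one, cre_θ, cim_θ, cre_two,
      cim_two]
    ring_nf
    exact ⟨cim c + cim c + 2 * (cre c ^ 2 + cre c * cim c + cim c ^ 2)- cim c, by ring⟩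
  obtain ⟨k, hk⟩ := hN2
  rw [hk] at hN
  have h2 : ¬ (2 ∣ nm a) := by
    rintro ⟨q, hq⟩; rw [hq, mul_assoc] at hN; omega
  have h3 : ¬ (3 ∣ nm a) := by
    rintro ⟨q, hq⟩; rw [hq, mul_assoc] at hN; omega
  obtain ⟨p, q, x, y, h1, hm, hn⟩ := int_lift _ _ h2 h3
  refine ⟨p + q * ω, x + y * ω, ?_, ?_⟩
  · rw [mul_conj_eq, nm, cre_coord, cim_coord, h1, Int.cast_one]
  · apply oext
    · rw [cre_add]; simp only [cre_mul, cim_mul, cre_coord, cim_coord, cre_θ, cim_θ, cre_two, cim_two]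
      rw [hm]; ring
    · rw [cim_add]; simp only [cre_mul, cim_mul, cre_coord, cim_coord, cre_θ, cim_θ, cre_two, cim_two]
      rw [hn]; ring

/-! The form -/
lemma psi_formula (x y : Fin 10 → O) : psi10 x y = θ * (
    x 0 * (-θ * conj (y 0) + conj (y 1))
    + x 1 * (-conj (y 0) - θ * conj (y 1) + conj (y 2))
    + x 2 * (-conj (y 1) - θ * conj (y 2) + conj (y 3))
    + x 3 * (-conj (y 2) - θ * conj (y 3))
    + x 4 * (-θ * conj (y 4) + conj (y 5))
    + x 5 * (-conj (y 4) - θ * conj (y 5) + conj (y 6))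
    + x 6 * (-conj (y 5) - θ * conj (y 6) + conj (y 7))
    + x 7 * (-conj (y 6) - θ * conj (y 7))
    + x 8 * conj (y 9) - x 9 * conj (y 8)) := by
  have h3 : (3 : O) = - (θ * θ) := by rw [θ_sq]; ring
  simp only [psi10, Fin.sum_univ_succ, Fin.sum_univ_zero, gram10, conj_θ, h3]
  simp [Fin.ext_iff]
  ring

lemma psi_add_left (x y z : Fin 10 → O) : psi10 (x + y) z = psi10 x z + psi10 y z :=
  (psiLin z).map_add x y
lemma psi_smul_left (a : O) (x z : Fin 10 → O) : psi10 (a • x) z = a * psi10 x z :=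
  (psiLin z).map_smul a x
lemma psi_symm (x y : Fin 10 → O) : psi10 y x = conj (psi10 x y) := by
  rw [psi_formula, psi_formula]
  simp only [map_add, map_mul, map_sub, map_neg, conj_conj, conj_θ]
  ring
lemma psi_add_right (x y z : Fin 10 → O) : psi10 z (x + y) = psi10 z x + psi10 z y := by
  rw [psi_symm, psi_add_left, map_add, ← psi_symm, ← psi_symm]
lemma psi_smul_right (a : O) (x z : Fin 10 → O) : psi10 z (a • x) = conj a * psi10 z x := by
  rw [psi_symm, psi_smul_left, map_mul, ← psi_symm]
lemma psi_sub_left (x y z : Fin 10 → O) : psi10 (x - y) z = psi10 x z - psi10 y z :=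
  (psiLin z).map_sub x y
lemma psi_sub_right (x y z : Fin 10 → O) : psi10 z (x - y) = psi10 z x - psi10 z y := by
  rw [psi_symm, psi_sub_left, map_sub, ← psi_symm, ← psi_symm]
lemma psi_dvd (x y : Fin 10 → O) : ∃ c, psi10 x y = θ * c := ⟨_, psi_formula x y⟩

lemma unimod (φ : (Fin 10 → O) →ₗ[O] O) : ∃ t, ∀ x, psi10 x t = θ * φ x := by
  let c : Fin 10 → O := fun i => φ (Pi.single i 1)
  have hφ : ∀ x, φ x = ∑ i, x i * c i := by
    intro x
    conv_lhs => rw [pi_eq_sum_univ' x]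
    simp [c]
  let k : O → O → O → O → Fin 4 → O := fun c1 c2 c3 c4 =>
    let s1 := θ * c1 + 2 * c2 - θ * c3 - c4
    ![s1, c1 + θ * s1, c2 + θ * c1 - 2 * s1, c3 - 2 * c1 + θ * c2 - θ * s1]
  let p := k (c 0) (c 1) (c 2) (c 3)
  let q := k (c 4) (c 5) (c 6) (c 7)
  refine ⟨fun i => conj (![p 0, p 1, p 2, p 3, q 0, q 1, q 2, q 3, - c 9, c 8] i), fun x => ?_⟩
  rw [psi_formula, hφ]
  simp only [conj_conj]
  congr 1
  simp [Fin.sum_univ_succ, p, q, k]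
  have h := θ_sq
  grind

lemma nondeg {t : Fin 10 → O} (h : ∀ y, psi10 t y = 0) : t = 0 := by
  funext i
  obtain ⟨y, hy⟩ := unimod (LinearMap.proj i)
  have := hy t
  rw [h] at this
  exact omul_eq_zero this.symm nm_θ'

lemma exists_w (z : Fin 10 → O) (hz : psi10 z z = 6) : ∃ w, psi10 w z = θ := by
  suffices h : ∃ φ : (Fin 10 → O) →ₗ[O] O, φ z = 1 by
    obtain ⟨φ, hφ⟩ := h
    obtain ⟨y, hy⟩ := unimod φ
    refine ⟨-y, ?_⟩
    have : psi10 (-y) z = - psi10 y z := (psiLin z).map_neg y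
    rw [this, psi_symm z y, hy, hφ, mul_one, conj_θ, neg_neg]
  let I : Ideal O := LinearMap.range ((LinearMap.applyₗ z : ((Fin 10 → O) →ₗ[O] O) →ₗ[O] O))
  have hI : ∀ i, z i ∈ I := fun i => ⟨LinearMap.proj i, rfl⟩
  have hn : ∀ i, (nm (z i) : O) ∈ I := fun i => by
    rw [← mul_conj_eq]; exact I.mul_mem_right _ (hI i)
  have h6 : (6 : O) ∈ I := by
    refine ⟨psiLin z, ?_⟩
    exact hz
  suffices h : (1 : O) ∈ I from h
  have h3 : ∃ i, nm (z i) % 2 ≠ 0 := by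
    by_contra! hc
    have : ∀ i, ∃ y, z i = 2 * y := by
      intro i
      have h := hc i
      have h2 : cre (z i) % 2 = 0 ∧ cim (z i) % 2 = 0 := by
        rw [← Int.even_iff, nm] at h
        rw [← Int.even_iff, ← Int.even_iff]
        simp only [Int.even_add, Int.even_mul, Int.even_pow] at h
        grind
      refine ⟨(cre (z i) / 2 : ℤ) + (cim (z i) / 2 : ℤ) * ω, ?_⟩
      apply oext
      · simp only [cre_mul, cre_coord, cim_coord, cre_two, cim_two]; omega
      · simp only [cim_mul, cre_coord, cim_coord, cre_two, cim_two]; omega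
    choose y hy using this
    have e : z = (2 : O) • y := funext hy
    obtain ⟨c, hc⟩ := psi_dvd y y
    rw [e, psi_smul_left, psi_smul_right, hc, show conj 2 = 2 from map_ofNat conj 2] at hz
    have := congrArg nm hz
    simp only [nm_mul, nm_two, nm_θ, nm_six] at this
    omega
  have h2 : ∃ i, nm (z i) % 3 ≠ 0 := by
    by_contra! hc
    have : ∀ i, ∃ y, z i = θ * y := by
      intro i
      have h := hc i
      have h2 : (cre (z i) - cim (z i)) % 3 = 0 := by
        obtain ⟨k, hk⟩ := Int.dvd_of_emod_eq_zero h
        have : (3 : ℤ) ∣ (cre (z i) - cim (z i)) ^ 2 := by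
          refine ⟨k - cre (z i) * cim (z i), ?_⟩
          rw [nm] at hk; linear_combination hk
        exact Int.emod_eq_zero_of_dvd (Int.prime_three.dvd_of_dvd_pow this)
      refine ⟨((cre (z i) + 2 * cim (z i)) / 3 : ℤ) + (-((2 * cre (z i) + cim (z i)) / 3) : ℤ) * ω, ?_⟩
      apply oext
      · simp only [cre_mul, cre_coord, cim_coord, cre_θ, cim_θ]; omega
      · simp only [cim_mul, cre_coord, cim_coord, cre_θ, cim_θ]; omega
    choose y hy using this
    have e : z = θ • y := funext hy
    obtain ⟨c, hc⟩ := psi_dvd y y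
    rw [e, psi_smul_left, psi_smul_right, hc, conj_θ] at hz
    have hz' : -θ * (-3 * c) = 6 := by rw [← hz, ← θ_sq]; ring
    have := congrArg nm hz'
    rw [← θ_sq] at this
    have e2 : -θ * (θ * θ * c) = (θ * θ * θ) * (-1 * c) := by ring
    rw [e2] at this
    simp only [nm_mul, nm_θ, nm_six] at this
    omega
  obtain ⟨i, hi⟩ := h3
  obtain ⟨j, hj⟩ := h2
  have hi' : ∃ k, 3 * nm (z i) + 6 * k = 3 := ⟨(3 - 3 * nm (z i)) / 6, by omega⟩
  obtain ⟨k, hk⟩ := hi'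
  have g3 : (3 : O) ∈ I := by
    have : (3 : O) = 3 * (nm (z i) : O) + k * 6 := by
      have := congrArg (Int.cast : ℤ → O) hk
      push_cast at this; linear_combination -this
    rw [this]
    exact I.add_mem (I.mul_mem_left _ (hn i)) (I.mul_mem_left _ h6)
  have hj' : ∃ k l, nm (z j) * l + 3 * k = 1 := by
    by_cases h : nm (z j) % 3 = 1
    · exact ⟨(1 - nm (z j)) / 3, 1, by omega⟩
    · exact ⟨(1 + nm (z j)) / 3, -1, by omega⟩
  obtain ⟨k, l, hk⟩ := hj'
  have : (1 : O) = l * (nm (z j) : O) + k * 3 := by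
    have := congrArg (Int.cast : ℤ → O) hk
    push_cast at this; linear_combination -this
  rw [this]
  exact I.add_mem (I.mul_mem_left _ (hn j)) (I.mul_mem_left _ g3)

/-! The main argument -/
lemma div_lin (f : (Fin 10 → O) →ₗ[O] O) (d : O) (hd : nm d ≠ 0) (h : ∀ x, ∃ c, f x = d * c) :
    ∃ f' : (Fin 10 → O) →ₗ[O] O, ∀ x, f x = d * f' x := by
  choose c hc using h
  refine ⟨⟨⟨c, fun x y => ocancel hd ?_⟩, fun a x => ocancel hd ?_⟩, hc⟩
  · rw [← hc, map_add, hc, hc, mul_add]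
  · rw [← hc, map_smul, hc, RingHom.id_apply, smul_eq_mul, smul_eq_mul]; ring

lemma mem_Λo {z x : Fin 10 → O} : x ∈ Λo z ↔ psi10 x z = 0 := Iff.rfl

lemma conj_tθ : conj (2 * θ) = -(2 * θ) := by
  rw [map_mul, conj_θ, show conj 2 = 2 from map_ofNat conj 2]; ring

lemma exists_pi (z w : Fin 10 → O) (hw : psi10 w z = θ) :
    ∃ (κ : (Fin 10 → O) →ₗ[O] O) (π : (Fin 10 → O) →ₗ[O] Λo z),
      (∀ x, psi10 x z = θ * κ x) ∧ (∀ x, x = (π x : Fin 10 → O) + κ x • w) := by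
  obtain ⟨κ, hκ⟩ := div_lin (psiLin z) θ nm_θ' (fun x => psi_dvd x z)
  have hκ' : ∀ x, psi10 x z = θ * κ x := hκ
  refine ⟨κ, LinearMap.codRestrict (Λo z) (LinearMap.id - κ.smulRight w) ?_, hκ', ?_⟩
  · intro x
    rw [mem_Λo]
    simp only [LinearMap.sub_apply, LinearMap.id_apply, LinearMap.smulRight_apply]
    rw [psi_sub_left, psi_smul_left, hw, hκ']; ring
  · intro x; simp

lemma perp (z w : Fin 10 → O) (hw : psi10 w z = θ) (s : Fin 10 → O)
    (hs : ∀ y ∈ Λo z, psi10 y s = 0) : ∃ β : O, s = β • z := by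
  obtain ⟨κ, π, hκ, hπ⟩ := exists_pi z w hw
  obtain ⟨c, hc⟩ := psi_dvd w s
  refine ⟨conj c, ?_⟩
  rw [← sub_eq_zero]
  apply nondeg
  intro y
  rw [psi_symm y, psi_sub_right, psi_smul_right, conj_conj]
  have : psi10 y s = κ y * (θ * c) := by
    conv_lhs => rw [hπ y]
    rw [psi_add_left, psi_smul_left, hs _ (π y).2, hc]; ring
  rw [this, hκ]
  convert map_zero conj using 2
  ring

lemma mem_of_smul {z v : Fin 10 → O} {d : O} (hd : nm d ≠ 0) (h : d • v ∈ Λo z) : v ∈ Λo z := by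
  rw [mem_Λo, psi_smul_left] at h
  exact omul_eq_zero h hd

lemma u0_mem {z w : Fin 10 → O} (hz : psi10 z z = 6) (hw : psi10 w z = θ) :
    z + (2 * θ) • w ∈ Λo z := by
  rw [mem_Λo, psi_add_left, psi_smul_left, hz, hw]
  linear_combination 2 * θ_sq

lemma radical (z w : Fin 10 → O) (hz : psi10 z z = 6) (hw : psi10 w z = θ) (x : Fin 10 → O)
    (hx : x ∈ Λo z) (h : ∀ y ∈ Λo z, ∃ c, psi10 y x = 6 * c) :
    ∃ (a : O) (v : Fin 10 → O), v ∈ Λo z ∧ x = a • (z + (2 * θ) • w) + (2 * θ) • v := by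
  obtain ⟨κ, π, hκ, hπ⟩ := exists_pi z w hw
  obtain ⟨φ, hφ⟩ := div_lin (psiLin x ∘ₗ (Λo z).subtype ∘ₗ π) 6 (by rw [nm_six]; norm_num)
    (fun y => h _ (π y).2)
  have hφ' : ∀ y, psi10 (π y) x = 6 * φ y := hφ
  obtain ⟨t, ht⟩ := unimod φ
  obtain ⟨a, ha⟩ := perp z w hw (x - (2 * θ) • t) (by
    intro y hy
    have hk : κ y = 0 := by
      have := hκ y
      rw [mem_Λo.1 hy] at this
      exact omul_eq_zero this.symm nm_θ'
    have e : y = π y := by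
      conv_lhs => rw [hπ y, hk, zero_smul, add_zero]
    have e2 := hφ' y
    rw [← e] at e2
    rw [psi_sub_right, psi_smul_right, ht, e2, conj_tθ]
    linear_combination 2 * φ y * θ_sq)
  have e : x = a • (z + (2 * θ) • w) + (2 * θ) • (t - a • w) := by
    rw [sub_eq_iff_eq_add] at ha
    rw [ha]
    module
  refine ⟨a, t - a • w, ?_, e⟩
  apply mem_of_smul nm_tθ
  have : (2 * θ) • (t - a • w) = x - a • (z + (2 * θ) • w) := by
    rw [eq_sub_iff_add_eq, add_comm]; exact e.symm
  rw [this]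
  exact Submodule.sub_mem _ hx (Submodule.smul_mem _ _ (u0_mem hz hw))

lemma dvd_of_smul (z w : Fin 10 → O) (hw : psi10 w z = θ) (a : O) (t : Fin 10 → O)
    (h : a • z = (2 * θ) • t) : ∃ c, a = 2 * θ * c := by
  have h1 := congrArg (fun x => psi10 x w) h
  simp only [psi_smul_left] at h1
  obtain ⟨c, hc⟩ := psi_dvd t w
  rw [hc, psi_symm w z, hw, conj_θ] at h1
  refine ⟨-c, ocancel nm_θ' ?_⟩
  linear_combination -h1

lemma h_u0 (z w : Fin 10 → O) (hz : psi10 z z = 6) (hw : psi10 w z = θ)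
    (h : ↥(Λo z) ≃ₗ[O] ↥(Λo z))
    (hh : ∀ u v : ↥(Λo z),
      psi10 (h u : Fin 10 → O) (h v : Fin 10 → O) = psi10 (u : Fin 10 → O) (v : Fin 10 → O)) :
    ∃ (a : O) (v : Λo z), h ⟨_, u0_mem hz hw⟩ = a • ⟨_, u0_mem hz hw⟩ + (2 * θ) • v := by
  obtain ⟨a, v, hv, e⟩ := radical z w hz hw (h ⟨_, u0_mem hz hw⟩) (h ⟨_, u0_mem hz hw⟩).2 (by
    intro y hy
    obtain ⟨y', hy'⟩ := h.surjective ⟨y, hy⟩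
    have : y = h y' := by rw [hy']
    obtain ⟨c, hc⟩ := psi_dvd y' w
    have h0 := mem_Λo.1 y'.2
    refine ⟨c, ?_⟩
    rw [this, hh]
    simp only
    rw [psi_add_right, psi_smul_right, h0, hc, conj_tθ]
    linear_combination -2 * c * θ_sq)
  exact ⟨a, ⟨v, hv⟩, Subtype.ext e⟩

lemma exists_unit (z w : Fin 10 → O) (hz : psi10 z z = 6) (hw : psi10 w z = θ)
    (h : ↥(Λo z) ≃ₗ[O] ↥(Λo z))
    (hh : ∀ u v : ↥(Λo z),
      psi10 (h u : Fin 10 → O) (h v : Fin 10 → O) = psi10 (u : Fin 10 → O) (v : Fin 10 → O)) :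
    ∃ (ε : O) (v : Λo z), ε * conj ε = 1 ∧
      h ⟨_, u0_mem hz hw⟩ = ε • ⟨_, u0_mem hz hw⟩ + (2 * θ) • v := by
  obtain ⟨a, v, e⟩ := h_u0 z w hz hw h hh
  obtain ⟨a', v', e'⟩ := h_u0 z w hz hw h.symm (fun u v => by
    rw [← hh, h.apply_symm_apply, h.apply_symm_apply])
  have e1 := congrArg h e'
  rw [h.apply_symm_apply, map_add, map_smul, map_smul, e] at e1
  have e2 : (1 - a * a') • z =
      (2 * θ) • (-((1 - a * a') • w) + (a' • (v : Fin 10 → O) + (h v' : Fin 10 → O))) := by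
    have e3 := congrArg (Subtype.val) e1
    simp only [Submodule.coe_add, Submodule.coe_smul] at e3
    linear_combination (norm := module) e3
  obtain ⟨c, hc⟩ := dvd_of_smul z w hw _ _ e2
  obtain ⟨ε, d, h1, h2⟩ := unit_lift a a' c hc
  refine ⟨ε, d • ⟨_, u0_mem hz hw⟩ + v, h1, ?_⟩
  rw [e, h2]
  module

/-- Let `z_o` be a 6-vector of `Λ` and `Λ_o` its orthogonal complement.
Every ψ-unitary 𝒪-module automorphism `h` of `Λ_o` extends *uniquely* to a ψ-unitary
automorphism of `Λ`; i.e. the restriction homomorphism from the stabilizer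
`{g ∈ U(Λ) : g(Λ_o) = Λ_o}` to `U(Λ_o)` is a group isomorphism. -/
theorem statement9 (zo : Fin 10 → O) (hzo : psi10 zo zo = 6)
    (h : ↥(Λo zo) ≃ₗ[O] ↥(Λo zo))
    (hh : ∀ u v : ↥(Λo zo),
      psi10 (h u : Fin 10 → O) (h v : Fin 10 → O) = psi10 (u : Fin 10 → O) (v : Fin 10 → O)) :
    ∃! g : (Fin 10 → O) ≃ₗ[O] (Fin 10 → O),
      IsUnitary10 g ∧ ∀ u : ↥(Λo zo), g (u : Fin 10 → O) = (h u : Fin 10 → O) := by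
  obtain ⟨w, hw⟩ := exists_w zo hzo
  obtain ⟨κ, π, hκ, hπ⟩ := exists_pi zo w hw
  obtain ⟨ε, v, hε, hv⟩ := exists_unit zo w hzo hw h hh
  have hκ0 : ∀ u : Λo zo, κ u = 0 := fun u => by
    have := hκ u
    rw [mem_Λo.1 u.2] at this
    exact omul_eq_zero this.symm nm_θ'
  have hπ0 : ∀ u : Λo zo, π u = u := fun u => by
    apply Subtype.ext
    have := hπ u
    rw [hκ0, zero_smul, add_zero] at this
    exact this.symm
  have hκw : κ w = 1 := ocancel nm_θ' (by rw [← hκ, hw, mul_one])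
  have hπw : π w = 0 := by
    have := hπ w
    rw [hκw, one_smul] at this
    apply Subtype.ext
    exact left_eq_add.1 (by rw [add_comm]; exact this)
  have hv' : (h ⟨_, u0_mem hzo hw⟩ : Fin 10 → O) = ε • (zo + (2 * θ) • w) + (2 * θ) • (v : Fin 10 → O) :=
    congrArg Subtype.val hv
  let g0 : (Fin 10 → O) →ₗ[O] (Fin 10 → O) :=
    (Λo zo).subtype ∘ₗ h.toLinearMap ∘ₗ π + κ.smulRight (ε • w + (v : Fin 10 → O))
  have hg0 : ∀ x, g0 x = (h (π x) : Fin 10 → O) + κ x • (ε • w + (v : Fin 10 → O)) := fun x => rfl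
  have hgu : ∀ u : Λo zo, g0 u = h u := fun u => by
    rw [hg0, hπ0, hκ0, zero_smul, add_zero]
  have hgw : g0 w = ε • w + (v : Fin 10 → O) := by
    rw [hg0, hκw, hπw, map_zero, one_smul]; simp
  have hinj : Function.Injective g0 := by
    rw [injective_iff_map_eq_zero]
    intro x hx
    have h1 := hg0 x
    rw [hx] at h1
    have h2 := congrArg κ h1
    simp only [map_add, map_smul, map_zero, hκ0, hκw, smul_eq_mul] at h2
    have h3 : κ x = 0 := by linear_combination -(conj ε) * h2 - κ x * hε
    rw [h3, zero_smul, add_zero] at h1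
    have h4 : π x = 0 := by
      apply h.injective
      rw [map_zero]
      exact Subtype.ext h1.symm
    rw [hπ x, h3, h4]; simp
  have hsurj : Function.Surjective g0 := by
    rw [← LinearMap.range_eq_top, Submodule.eq_top_iff']
    have hu : ∀ u : Λo zo, (u : Fin 10 → O) ∈ LinearMap.range g0 := fun u =>
      ⟨h.symm u, by rw [hgu, h.apply_symm_apply]⟩
    have hw' : w ∈ LinearMap.range g0 := by
      have h1 : w = conj ε • (g0 w - (v : Fin 10 → O)) := by
        rw [hgw, add_sub_cancel_right, smul_smul, mul_comm, hε, one_smul]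
      rw [h1]
      exact Submodule.smul_mem _ _ (Submodule.sub_mem _ ⟨w, rfl⟩ (hu v))
    intro x
    rw [hπ x]
    exact Submodule.add_mem _ (hu _) (Submodule.smul_mem _ _ hw')
  -- the decomposition of multiples
  let A : (Fin 10 → O) → Λo zo := fun x => (2 * θ) • π x + κ x • ⟨_, u0_mem hzo hw⟩
  have hA : ∀ x, (2 * θ) • x = (A x : Fin 10 → O) - κ x • zo := fun x => by
    conv_lhs => rw [hπ x]
    simp only [A, Submodule.coe_add, Submodule.coe_smul]
    module
  have hgA : ∀ x, (2 * θ) • g0 x = (h (A x) : Fin 10 → O) - (κ x * ε) • zo := fun x => by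
    simp only [A, map_add, map_smul, Submodule.coe_add, Submodule.coe_smul, hv', hg0]
    module
  have hpsi : ∀ (u u' : Λo zo) (c c' : O),
      psi10 ((u : Fin 10 → O) - c • zo) ((u' : Fin 10 → O) - c' • zo) =
        psi10 (u : Fin 10 → O) (u' : Fin 10 → O) + c * conj c' * 6 := by
    intro u u' c c'
    have h1 := mem_Λo.1 u.2
    have h2 : psi10 zo u' = 0 := by rw [psi_symm (u' : Fin 10 → O), mem_Λo.1 u'.2, map_zero]
    rw [psi_sub_left, psi_sub_right, psi_sub_right, psi_smul_right, psi_smul_left, psi_smul_left,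
      psi_smul_right, h1, h2, hzo]
    ring
  have hunit : ∀ x y, psi10 (g0 x) (g0 y) = psi10 x y := by
    intro x y
    have h1 : psi10 ((2 * θ) • g0 x) ((2 * θ) • g0 y) = psi10 ((2 * θ) • x) ((2 * θ) • y) := by
      rw [hgA, hgA, hA, hA, hpsi, hpsi, hh, map_mul]
      linear_combination κ x * conj (κ y) * 6 * hε
    simp only [psi_smul_left, psi_smul_right, conj_tθ] at h1
    rw [neg_mul, neg_mul, neg_inj] at h1
    exact ocancel nm_tθ (ocancel nm_tθ h1)
  refine ⟨LinearEquiv.ofBijective g0 ⟨hinj, hsurj⟩, ⟨hunit, hgu⟩, ?_⟩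
  -- uniqueness
  have key : ∀ g : (Fin 10 → O) ≃ₗ[O] (Fin 10 → O), IsUnitary10 g →
      (∀ u : ↥(Λo zo), g (u : Fin 10 → O) = (h u : Fin 10 → O)) →
      ∃ a : O, nm a = 1 ∧ g zo = a • zo := by
    intro g hg hgh
    obtain ⟨a, ha⟩ := perp zo w hw (g zo) (by
      intro y hy
      have : y = g (h.symm ⟨y, hy⟩ : Λo zo) := by rw [hgh, h.apply_symm_apply]
      rw [this, hg]
      exact mem_Λo.1 (h.symm ⟨y, hy⟩).2)
    refine ⟨a, ?_, ha⟩
    have h1 := hg zo zo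
    rw [ha, psi_smul_left, psi_smul_right, hzo, ← mul_assoc, mul_conj_eq] at h1
    have h2 := congrArg cre h1
    rw [cre_mul, cre_int, cre_six, cim_six] at h2
    omega
  have huniq : ∀ g₁ g₂ : (Fin 10 → O) ≃ₗ[O] (Fin 10 → O), IsUnitary10 g₁ → IsUnitary10 g₂ →
      (∀ u : ↥(Λo zo), g₁ (u : Fin 10 → O) = (h u : Fin 10 → O)) →
      (∀ u : ↥(Λo zo), g₂ (u : Fin 10 → O) = (h u : Fin 10 → O)) → g₁ = g₂ := by
    intro g₁ g₂ u1 u2 e1 e2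
    obtain ⟨a, na, ha⟩ := key g₁ u1 e1
    obtain ⟨c, nc, hc⟩ := key g₂ u2 e2
    have E : g₁ (zo + (2 * θ) • w) = g₂ (zo + (2 * θ) • w) :=
      (e1 ⟨_, u0_mem hzo hw⟩).trans (e2 ⟨_, u0_mem hzo hw⟩).symm
    rw [map_add, map_add, map_smul, map_smul, ha, hc] at E
    have E2 : (a - c) • zo = (2 * θ) • (g₂ w - g₁ w) := by
      linear_combination (norm := module) E
    obtain ⟨d, hd⟩ := dvd_of_smul zo w hw _ _ E2
    have hN : nm (a - c) + nm (a + c) = 2 * (nm a + nm c) := by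
      simp only [nm, cre_add, cim_add, cre_sub, cim_sub]; ring
    have hN1 := nm_nonneg (a + c)
    have hN2 := nm_nonneg d
    rw [hd, nm_mul, nm_mul, nm_two, nm_θ, na, nc] at hN
    have hd0 : d = 0 := nm_eq_zero (by omega)
    have hac : a = c := by rw [hd0, mul_zero] at hd; exact sub_eq_zero.1 hd
    rw [hac] at E
    have hw12 : g₁ w = g₂ w := vcancel nm_tθ (add_left_cancel E)
    apply LinearEquiv.ext
    intro x
    rw [hπ x, map_add, map_add, map_smul, map_smul, hw12, e1, e2]
  rintro g ⟨hg1, hg2⟩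
  exact huniq _ _ hg1 hunit hg2 hgu

end
end

section
/- For 1 ≤ k ≤ 10 let G_k be the k × k complex Hermitian matrix with diagonal entries 3, entries (i, i+1) equal to θ = i√3, entries (i+1, i) equal to −i√3, and all other entries 0 (the complexified Gram matrix of the 𝒪-lattice Λᵏ). Then: G_k is positive definite if and only if 1 ≤ k ≤ 4; G₅ is positive semidefinite with one-dimensional kernel; and for 6 ≤ k ≤ 10, G_k is nondegenerate of signature (k−1, 1), i.e. it has exactly k−1 positive and one negative eigenvalue. -/
open scoped ComplexOrder

noncomputable section

/-- The complexified Gram matrix `G_k` of the 𝒪-lattice `Λᵏ`: diagonal entries `3`,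
entries `(i, i+1)` equal to `θ = i√3`, entries `(i+1, i)` equal to `−i√3`, all other
entries `0`. -/
def G (k : ℕ) : Matrix (Fin k) (Fin k) ℂ := fun i j =>
  if i = j then 3
  else if (i : ℕ) + 1 = (j : ℕ) then Complex.I * (Real.sqrt 3 : ℂ)
  else if (j : ℕ) + 1 = (i : ℕ) then -(Complex.I * (Real.sqrt 3 : ℂ))
  else 0

def lam (k : ℕ) (j : Fin k) : ℝ :=
  3 + 2 * Real.sqrt 3 * Real.cos (((j : ℕ) + 1 : ℝ) * Real.pi / (k + 1))

lemma ang_pos (k : ℕ) (j : Fin k) : 0 < ((j : ℕ) + 1 : ℝ) * Real.pi / (k + 1) := by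
  have := Real.pi_pos
  positivity

lemma ang_lt (k : ℕ) (j : Fin k) : ((j : ℕ) + 1 : ℝ) * Real.pi / (k + 1) < Real.pi := by
  have h := Real.pi_pos
  have hk : (0 : ℝ) < k + 1 := by positivity
  rw [div_lt_iff₀ hk, mul_comm]
  have : ((j : ℕ) : ℝ) < k := by exact_mod_cast j.2
  gcongr

lemma cos56 : Real.cos (5 * Real.pi / 6) = -(Real.sqrt 3 / 2) := by
  rw [show 5 * Real.pi / 6 = Real.pi - Real.pi / 6 by ring, Real.cos_pi_sub, Real.cos_pi_div_six]

lemma lam_eq (k : ℕ) (j : Fin k) : lam k j = 2 * Real.sqrt 3 *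
    (Real.cos (((j : ℕ) + 1 : ℝ) * Real.pi / (k + 1)) - Real.cos (5 * Real.pi / 6)) := by
  have : Real.sqrt 3 * Real.sqrt 3 = 3 := Real.mul_self_sqrt (by norm_num)
  rw [cos56, lam]
  linarith

lemma mem1 (k : ℕ) (j : Fin k) :
    ((j : ℕ) + 1 : ℝ) * Real.pi / (k + 1) ∈ Set.Icc 0 Real.pi :=
  ⟨(ang_pos k j).le, (ang_lt k j).le⟩

lemma mem2 : 5 * Real.pi / 6 ∈ Set.Icc 0 Real.pi := by
  have := Real.pi_pos
  constructor <;> linarith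

lemma lam_pos (k : ℕ) (j : Fin k) : 0 < lam k j ↔ 6 * ((j : ℕ) + 1) < 5 * (k + 1) := by
  have h3 : 0 < 2 * Real.sqrt 3 := by positivity
  have hk : (0 : ℝ) < k + 1 := by positivity
  rw [lam_eq, mul_pos_iff_of_pos_left h3, sub_pos,
    Real.strictAntiOn_cos.lt_iff_gt mem2 (mem1 k j), div_lt_div_iff₀ hk (by norm_num),
    ← Nat.cast_lt (α := ℝ)]
  push_cast
  have hp := Real.pi_pos
  constructor <;> intro h <;> nlinarith

lemma lam_neg (k : ℕ) (j : Fin k) : lam k j < 0 ↔ 5 * (k + 1) < 6 * ((j : ℕ) + 1) := by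
  have h3 : 0 < 2 * Real.sqrt 3 := by positivity
  have hk : (0 : ℝ) < k + 1 := by positivity
  rw [lam_eq, ← neg_pos, ← mul_neg, mul_pos_iff_of_pos_left h3, neg_pos, sub_neg,
    Real.strictAntiOn_cos.lt_iff_gt (mem1 k j) mem2, div_lt_div_iff₀ (by norm_num) hk,
    ← Nat.cast_lt (α := ℝ)]
  push_cast
  have hp := Real.pi_pos
  constructor <;> intro h <;> nlinarith

lemma lam_inj (k : ℕ) : Function.Injective (lam k) := by
  intro i j h
  have h3 : 2 * Real.sqrt 3 ≠ 0 := by positivity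
  have hk : (k + 1 : ℝ) ≠ 0 := by positivity
  have h := Real.injOn_cos (mem1 k i) (mem1 k j) (mul_left_cancel₀ h3 (add_left_cancel h))
  have hp := Real.pi_ne_zero
  field_simp at h
  have : ((i : ℕ) : ℝ) = j := by linarith
  exact Fin.ext (by exact_mod_cast this)

lemma G_mulVec (k : ℕ) (v : ℕ → ℂ) (h0 : v 0 = 0) (hk : v (k + 1) = 0) (i : Fin k) :
    (G k).mulVec (fun j : Fin k => v (j + 1)) i =
      3 * v (i + 1) + Complex.I * (Real.sqrt 3 : ℂ) * (v (i + 2) - v i) := by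
  have e : ∀ j : Fin k, G k i j * v (j + 1) =
      (fun m : ℕ => (if (i : ℕ) = m then 3 * v (m + 1) else 0)
        + (if (i : ℕ) + 1 = m then Complex.I * (Real.sqrt 3 : ℂ) * v (m + 1) else 0)
        - (if (i : ℕ) = m + 1 then Complex.I * (Real.sqrt 3 : ℂ) * v (m + 1) else 0)) (j : ℕ) := by
    intro j
    simp only [G, Fin.ext_iff]
    split_ifs <;> first | omega | ring
  simp only [Matrix.mulVec, dotProduct]
  rw [Finset.sum_congr rfl (fun j _ => e j), Fin.sum_univ_eq_sum_range
    (fun m : ℕ => (if (i : ℕ) = m then 3 * v (m + 1) else 0)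
        + (if (i : ℕ) + 1 = m then Complex.I * (Real.sqrt 3 : ℂ) * v (m + 1) else 0)
        - (if (i : ℕ) = m + 1 then Complex.I * (Real.sqrt 3 : ℂ) * v (m + 1) else 0)), Finset.sum_sub_distrib,
    Finset.sum_add_distrib, Finset.sum_ite_eq, Finset.sum_ite_eq]
  have a : (if (i : ℕ) + 1 ∈ Finset.range k then
      Complex.I * (Real.sqrt 3 : ℂ) * v ((i : ℕ) + 1 + 1) else 0) =
      Complex.I * (Real.sqrt 3 : ℂ) * v (i + 2) := by
    split_ifs with h
    · rfl
    · have : (i : ℕ) + 2 = k + 1 := by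
        have := i.2
        simp at h
        omega
      rw [this, hk, mul_zero]
  have b : (∑ m ∈ Finset.range k, if (i : ℕ) = m + 1 then
      Complex.I * (Real.sqrt 3 : ℂ) * v (m + 1) else 0) = Complex.I * (Real.sqrt 3 : ℂ) * v i := by
    obtain ⟨i, hi⟩ := i
    cases i with
    | zero => simp [h0]
    | succ n =>
      simp only [Nat.add_right_cancel_iff]
      rw [Finset.sum_ite_eq, if_pos (by simp; omega)]
  rw [a, b, if_pos (by simp)]
  ring

lemma G_eig (k : ℕ) (j : Fin k) :
    ∃ v : Fin k → ℂ, v ≠ 0 ∧ (G k).mulVec v = ((lam k j : ℝ) : ℂ) • v := by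
  set x : ℝ := ((j : ℕ) + 1 : ℝ) * Real.pi / (k + 1) with hx
  let v : ℕ → ℂ := fun m => (-Complex.I) ^ m * (Real.sin (m * x) : ℂ)
  refine ⟨fun i => v (i + 1), ?_, ?_⟩
  · intro h
    have h := congrFun h ⟨0, j.pos⟩
    have hs := (Real.sin_pos_of_pos_of_lt_pi (ang_pos k j) (ang_lt k j)).ne'
    simp only [v] at h
    simp [-Complex.ofReal_sin] at h
    exact hs h
  · funext i
    rw [G_mulVec k v (by simp [v])]
    · simp only [v, Pi.smul_apply, smul_eq_mul, lam, ← hx]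
      have t : Real.sin (((i : ℕ) + 2 : ℕ) * x) + Real.sin ((i : ℕ) * x)
          = 2 * Real.cos x * Real.sin (((i : ℕ) + 1 : ℕ) * x) := by
        push_cast
        rw [show ((i : ℕ) + 2 : ℝ) * x = ((i : ℕ) + 1 : ℝ) * x + x by ring,
          show ((i : ℕ) : ℝ) * x = ((i : ℕ) + 1 : ℝ) * x - x by ring,
          Real.sin_add, Real.sin_sub]
        ring
      have t' := congrArg (fun r : ℝ => (r : ℂ)) t
      simp only [Complex.ofReal_add, Complex.ofReal_mul] at t'
      simp only [Complex.ofReal_add, Complex.ofReal_mul]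
      rw [pow_add, pow_add]
      have I2 : Complex.I ^ 2 = -1 := Complex.I_sq
      push_cast at t' ⊢
      linear_combination (-Complex.I * (-Complex.I) ^ (i : ℕ) * (Real.sqrt 3 : ℂ)) * t' +
        (Complex.I * (-Complex.I) ^ (i : ℕ) * (Real.sqrt 3 : ℂ) *
          Complex.sin (((i : ℕ) + 2) * x)) * I2
    · have : ((k + 1 : ℕ) : ℝ) * x = ((j + 1 : ℕ) : ℝ) * Real.pi := by
        have hk : (k + 1 : ℝ) ≠ 0 := by positivity
        rw [hx]
        push_cast
        field_simp
      simp only [v]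
      rw [this, Real.sin_nat_mul_pi]
      simp

lemma G_herm (k : ℕ) : (G k).IsHermitian := by
  ext i j
  simp only [Matrix.conjTranspose_apply, G, Fin.ext_iff]
  split_ifs <;> first | omega | simp

lemma G_equiv (k : ℕ) (hk : (G k).IsHermitian) :
    ∃ e : Fin k ≃ Fin k, ∀ j, hk.eigenvalues (e j) = lam k j := by
  have h : ∀ j, ∃ i, hk.eigenvalues i = lam k j := by
    intro j
    obtain ⟨v, hv, hG⟩ := G_eig k j
    have h1 : Module.End.HasEigenvalue (Matrix.toLin' (G k)) ((lam k j : ℝ) : ℂ) :=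
      Module.End.hasEigenvalue_of_hasEigenvector
        (Module.End.hasEigenvector_iff.mpr ⟨Module.End.mem_eigenspace_iff.mpr (by simpa using hG), hv⟩)
    have h2 := h1.mem_spectrum
    rw [Matrix.spectrum_toLin', hk.spectrum_eq_image_range] at h2
    obtain ⟨r, ⟨i, hi⟩, hr⟩ := h2
    exact ⟨i, by rw [hi]; exact Complex.ofReal_injective hr⟩
  choose f hf using h
  have inj : Function.Injective f := fun a b hab => lam_inj k (by rw [← hf, ← hf, hab])
  exact ⟨Equiv.ofBijective f (Finite.injective_iff_bijective.mp inj), hf⟩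

lemma G_card (k : ℕ) (hk : (G k).IsHermitian) (p : ℝ → Prop) [DecidablePred p] :
    (Finset.univ.filter fun i => p (hk.eigenvalues i)).card =
    (Finset.univ.filter fun i => p (lam k i)).card := by
  obtain ⟨e, he⟩ := G_equiv k hk
  symm
  refine Finset.card_equiv e ?_
  intro i
  simp [he]

/-- For `1 ≤ k ≤ 10`, the Hermitian matrix `G_k` is positive definite iff
`k ≤ 4`; `G₅` is positive semidefinite with one-dimensional kernel; and for
`6 ≤ k ≤ 10`, `G_k` is nondegenerate of signature `(k−1, 1)`, i.e. it has exactly `k−1`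
positive and one negative eigenvalue. -/
theorem statement12 :
    (∀ k : ℕ, 1 ≤ k → k ≤ 10 → ((G k).PosDef ↔ k ≤ 4)) ∧
    ((G 5).PosSemidef ∧
      Module.finrank ℂ ↥(LinearMap.ker (Matrix.toLin' (G 5))) = 1) ∧
    (∀ k : ℕ, 6 ≤ k → k ≤ 10 →
      (G k).det ≠ 0 ∧
      ∀ hk : (G k).IsHermitian,
        (Finset.univ.filter fun i => 0 < hk.eigenvalues i).card = k - 1 ∧
        (Finset.univ.filter fun i => hk.eigenvalues i < 0).card = 1) := by
  refine ⟨?_, ⟨?_, ?_⟩, ?_⟩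
  · intro k h1 _
    obtain ⟨e, he⟩ := G_equiv k (G_herm k)
    rw [(G_herm k).posDef_iff_eigenvalues_pos]
    constructor
    · intro h
      have := h (e ⟨k - 1, by omega⟩)
      rw [he, lam_pos] at this
      simp only at this
      omega
    · intro h i
      obtain ⟨j, rfl⟩ := e.surjective i
      rw [he, lam_pos]
      omega
  · obtain ⟨e, he⟩ := G_equiv 5 (G_herm 5)
    rw [(G_herm 5).posSemidef_iff_eigenvalues_nonneg]
    intro i
    obtain ⟨j, rfl⟩ := e.surjective i
    rw [Pi.zero_apply, he, ← not_lt, lam_neg]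
    omega
  · have hr := (G_herm 5).rank_eq_card_non_zero_eigs
    have hc := G_card 5 (G_herm 5) (fun x => x ≠ 0)
    have hn := LinearMap.finrank_range_add_finrank_ker (Matrix.toLin' (G 5))
    have h4 : (Finset.univ.filter fun i => lam 5 i ≠ 0).card = 4 := by
      simp only [ne_iff_lt_or_gt, lam_pos, lam_neg]
      decide
    rw [Fintype.card_subtype, hc, h4] at hr
    rw [Matrix.rank, ← Matrix.toLin'_apply'] at hr
    rw [hr] at hn
    simp at hn
    omega
  · intro k h6 h10
    refine ⟨?_, ?_⟩
    · obtain ⟨e, he⟩ := G_equiv k (G_herm k)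
      rw [(G_herm k).det_eq_prod_eigenvalues, Finset.prod_ne_zero_iff]
      intro i _
      obtain ⟨j, rfl⟩ := e.surjective i
      rw [he]
      simp only [ne_eq, RCLike.ofReal_eq_zero]
      rw [← ne_eq, ne_iff_lt_or_gt, lam_pos, lam_neg]
      omega
    · intro hk
      rw [G_card k hk (fun x => 0 < x), G_card k hk (fun x => x < 0)]
      simp only [lam_pos, lam_neg]
      interval_cases k <;> decide

end
end

section
/- In the commutative ring R := ℤ[x, y]/(x⁶ − 1, y¹² − 1), the annihilator of the element (1 − x)(1 − y) is exactly the ideal generated by 1 + x + x² + ⋯ + x⁵ and 1 + y + y² + ⋯ + y¹¹. -/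
noncomputable section

open MvPolynomial

/-- The group ring `R = ℤ[x, y]/(x⁶ − 1, y¹² − 1)` of the product of cyclic groups of
orders 6 and 12 over ℤ. -/
abbrev R13 : Type :=
  MvPolynomial (Fin 2) ℤ ⧸
    Ideal.span {(X 0 : MvPolynomial (Fin 2) ℤ) ^ 6 - 1, (X 1 : MvPolynomial (Fin 2) ℤ) ^ 12 - 1}

/-- The image of `x` in `R`. -/
def xR : R13 := Ideal.Quotient.mk _ (X 0)

/-- The image of `y` in `R`. -/
def yR : R13 := Ideal.Quotient.mk _ (X 1)

theorem aux13 (k : Fin 2) (f : MvPolynomial (Fin 2) ℤ) :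
    (X k - 1 : MvPolynomial (Fin 2) ℤ) ∣
      f - aeval (fun i => if i = k then (1 : MvPolynomial (Fin 2) ℤ) else X i) f := by
  rw [← Ideal.mem_span_singleton, ← Ideal.Quotient.eq]
  have h : (Ideal.Quotient.mk (Ideal.span {(X k - 1 : MvPolynomial (Fin 2) ℤ)})) =
      (Ideal.Quotient.mk (Ideal.span {(X k - 1 : MvPolynomial (Fin 2) ℤ)})).comp
        (aeval (R := ℤ) (fun i => if i = k then (1 : MvPolynomial (Fin 2) ℤ)
          else X i)).toRingHom := by
    apply MvPolynomial.ringHom_ext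
    · intro n; simp
    · intro i
      by_cases hi : i = k
      · subst hi
        simp only [RingHom.comp_apply, AlgHom.toRingHom_eq_coe, RingHom.coe_coe, aeval_X, if_true]
        rw [Ideal.Quotient.eq]
        exact Ideal.mem_span_singleton_self _
      · simp [hi]
  exact congrArg (fun g => g f) h

theorem aux13b (k j : Fin 2) (hkj : j ≠ k) (n : ℕ) (hn : n ≠ 0) (b : MvPolynomial (Fin 2) ℤ)
    (h : (X k - 1 : MvPolynomial (Fin 2) ℤ) ∣ b * (X j ^ n - 1)) :
    (X k - 1 : MvPolynomial (Fin 2) ℤ) ∣ b := by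
  obtain ⟨c, hc⟩ := h
  have h2 := congrArg
    (aeval (R := ℤ) (fun i => if i = k then (1 : MvPolynomial (Fin 2) ℤ) else X i)) hc
  simp only [map_mul, map_sub, map_pow, aeval_X, map_one, if_true, hkj, if_false, sub_self,
    zero_mul] at h2
  have h3 : (X j ^ n - 1 : MvPolynomial (Fin 2) ℤ) ≠ 0 := by
    intro h0
    have := congrArg (eval (fun _ => (0 : ℤ))) h0
    simp [hn] at this
  have h4 := (mul_eq_zero.mp h2).resolve_right h3
  have h5 := aux13 k b
  rwa [h4, sub_zero] at h5

theorem aux13c (k : Fin 2) : (X k - 1 : MvPolynomial (Fin 2) ℤ) ≠ 0 := by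
  intro h0
  have := congrArg (eval (fun _ => (0 : ℤ))) h0
  simp at this

/-- In `R = ℤ[x, y]/(x⁶ − 1, y¹² − 1)`, the annihilator of
`(1 − x)(1 − y)` is exactly the ideal generated by `1 + x + ⋯ + x⁵` and
`1 + y + ⋯ + y¹¹`. -/
theorem statement13 (r : R13) :
    r * ((1 - xR) * (1 - yR)) = 0 ↔
      r ∈ Ideal.span ({∑ i ∈ Finset.range 6, xR ^ i, ∑ i ∈ Finset.range 12, yR ^ i} :
        Set R13) := by
  have hx6 : xR ^ 6 - 1 = 0 := by
    have : xR ^ 6 - 1 = Ideal.Quotient.mk (Ideal.span {(X 0 : MvPolynomial (Fin 2) ℤ) ^ 6 - 1,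
      (X 1 : MvPolynomial (Fin 2) ℤ) ^ 12 - 1}) (X 0 ^ 6 - 1) := by simp [xR]
    rw [this, Ideal.Quotient.eq_zero_iff_mem]
    exact Ideal.subset_span (by simp)
  have hy12 : yR ^ 12 - 1 = 0 := by
    have : yR ^ 12 - 1 = Ideal.Quotient.mk (Ideal.span {(X 0 : MvPolynomial (Fin 2) ℤ) ^ 6 - 1,
      (X 1 : MvPolynomial (Fin 2) ℤ) ^ 12 - 1}) (X 1 ^ 12 - 1) := by simp [yR]
    rw [this, Ideal.Quotient.eq_zero_iff_mem]
    exact Ideal.subset_span (by simp)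
  constructor
  · obtain ⟨f, rfl⟩ := Ideal.Quotient.mk_surjective r
    intro h
    have h' : Ideal.Quotient.mk (Ideal.span {(X 0 : MvPolynomial (Fin 2) ℤ) ^ 6 - 1,
      (X 1 : MvPolynomial (Fin 2) ℤ) ^ 12 - 1}) (f * ((1 - X 0) * (1 - X 1))) = 0 := by
      rw [← h]; simp [xR, yR]
    rw [Ideal.Quotient.eq_zero_iff_mem, Ideal.mem_span_pair] at h'
    obtain ⟨a, b, hab⟩ := h'
    have gx := mul_geom_sum (X 0 : MvPolynomial (Fin 2) ℤ) 6
    have gy := mul_geom_sum (X 1 : MvPolynomial (Fin 2) ℤ) 12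
    obtain ⟨b', rfl⟩ : (X 0 - 1 : MvPolynomial (Fin 2) ℤ) ∣ b := by
      apply aux13b 0 1 (by decide) 12 (by norm_num)
      refine ⟨f * (X 1 - 1) - a * ∑ i ∈ Finset.range 6, X 0 ^ i, ?_⟩
      linear_combination hab + a * gx
    obtain ⟨a', rfl⟩ : (X 1 - 1 : MvPolynomial (Fin 2) ℤ) ∣ a := by
      apply aux13b 1 0 (by decide) 6 (by norm_num)
      refine ⟨f * (X 0 - 1) - (X 0 - 1) * b' * ∑ i ∈ Finset.range 12, X 1 ^ i, ?_⟩
      linear_combination hab + (X 0 - 1) * b' * gy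
    have key : a' * ∑ i ∈ Finset.range 6, X 0 ^ i + b' * ∑ i ∈ Finset.range 12, X 1 ^ i = f := by
      apply mul_left_cancel₀ (mul_ne_zero (aux13c 0) (aux13c 1))
      linear_combination hab + (X 1 - 1) * a' * gx + (X 0 - 1) * b' * gy
    rw [Ideal.mem_span_pair]
    refine ⟨Ideal.Quotient.mk _ a', Ideal.Quotient.mk _ b', ?_⟩
    rw [← key]
    simp only [map_add, map_mul, map_sum, map_pow, xR, yR]
  · intro h
    rw [Ideal.mem_span_pair] at h
    obtain ⟨a, b, rfl⟩ := h
    have gx := mul_geom_sum xR 6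
    have gy := mul_geom_sum yR 12
    rw [hx6] at gx
    rw [hy12] at gy
    linear_combination a * (yR - 1) * gx + b * (xR - 1) * gy

end
end

section
/- The ideal of 𝒪[η]/(η¹² − 1) generated by the image of h lies in the radical of the Hermitian form ψ₀, so ψ₀ induces a Hermitian form ψ on A_𝒪 = 𝒪[η]/(h) for which multiplication by η is unitary. Moreover, the images s₁, …, s₁₀ in A_𝒪 of the elements (ω²η)¹, …, (ω²η)¹⁰ form an 𝒪-basis of A_𝒪 on which ψ(sᵢ, sᵢ) = 3 for all i, ψ(sᵢ, sᵢ₊₁) = θ for 1 ≤ i < 10, and ψ(sᵢ, sⱼ) = 0 for j > i+1; that is, (A_𝒪, ψ) is isomorphic as a Hermitian 𝒪-lattice to Λ¹⁰. -/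
open Polynomial

noncomputable section

/-- `𝒪[η]/(η¹² − 1)`, modelled as coefficient vectors with respect to the 𝒪-basis
`1, η, η², …, η¹¹`. -/
abbrev B12 : Type := Fin 12 → O

/-- The monomial `ηᵃ` as an element of `𝒪[η]/(η¹² − 1)`. -/
def ηpow (a : Fin 12) : B12 := Pi.single a 1

/-- Multiplication by `η` on `𝒪[η]/(η¹² − 1)`: the cyclic shift of coefficients. -/
def S (x : B12) : B12 := fun a => x (a - 1)

/-- The coefficient function `F` of the Hermitian form `ψ₀`: `F(0) = 3`,
`F(11) = −1 − ω`, `F(1) = −1 − ω⁻¹` (note `ω⁻¹ = ω⁵`), and `F(k) = 0` otherwise. -/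
def F12 : Fin 12 → O := fun k =>
  if k = 0 then 3 else if k = 11 then -1 - ω else if k = 1 then -1 - ω ^ 5 else 0

/-- The Hermitian form `ψ₀` on `𝒪[η]/(η¹² − 1)`: 𝒪-linear in the first variable,
conjugate-linear in the second, with `ψ₀(ηᵃ, ηᵇ) = F(a − b mod 12)`. -/
def psi0 (x y : B12) : O := ∑ a : Fin 12, ∑ b : Fin 12, x a * conj (y b) * F12 (a - b)

/-- `Σᵢ₌₀¹¹ ηⁱ`. -/
def σ₁ : B12 := fun _ => 1

/-- `Σᵢ₌₀¹¹ (ωη)ⁱ`. -/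
def σ₂ : B12 := fun a => ω ^ (a : ℕ)

/-- The 𝒪-submodule of `𝒪[η]/(η¹² − 1)` underlying the ideal `(h)`, where
`h = (η¹² − 1)/((η − 1)(η − ω⁻¹))`.  Indeed `(h) = (Σηⁱ, Σ(ωη)ⁱ)` (both generators are
multiples of `h`, and `h` is an 𝒪[η]-combination of them since `ω⁻¹ − 1` is a unit),
and as an 𝒪-module this ideal is spanned by `Σηⁱ` and `Σ(ωη)ⁱ` alone, because
`η·Σηⁱ = Σηⁱ` and `η·Σ(ωη)ⁱ = ω⁻¹·Σ(ωη)ⁱ`. -/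
def N : Submodule O B12 := Submodule.span O {σ₁, σ₂}

/-- `A_𝒪 = 𝒪[η]/(h)`, a free 𝒪-module of rank 10. -/
abbrev A12 : Type := B12 ⧸ N

/-- The quotient map `𝒪[η]/(η¹² − 1) → A_𝒪`. -/
def mkA : B12 → A12 := Submodule.Quotient.mk

/-- The image `s_i` in `A_𝒪` of `(ω²η)^i`, for `i = 1, …, 10` (indexed by `Fin 10`,
so `sB i` is `s_{i+1}`). -/
def sB (i : Fin 10) : A12 :=
  mkA (ω ^ (2 * ((i : ℕ) + 1)) • ηpow (Fin.castLE (by omega) i.succ))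

lemma ω2 : ω ^ 2 = ω - 1 := by linear_combination ω_sq
lemma ω3 : ω ^ 3 = -1 := by linear_combination (ω + 1) * ω_sq
lemma ω4 : ω ^ 4 = -ω := by linear_combination ω * ω3
lemma ω5 : ω ^ 5 = 1 - ω := by linear_combination ω ^ 2 * ω3 - ω2
lemma ω6 : ω ^ 6 = 1 := by linear_combination (ω ^ 3 - 1) * ω3
lemma ω7 : ω ^ 7 = ω := by linear_combination ω * ω6
lemma ω8 : ω ^ 8 = ω - 1 := by linear_combination ω ^ 2 * ω6 + ω2
lemma ω9 : ω ^ 9 = -1 := by linear_combination ω ^ 3 * ω6 + ω3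
lemma ω10 : ω ^ 10 = -ω := by linear_combination ω ^ 4 * ω6 + ω4
lemma ω11 : ω ^ 11 = 1 - ω := by linear_combination ω ^ 5 * ω6 + ω5

lemma F12_eq (k : Fin 12) : F12 k = (if k = 0 then 3 else 0) + (if k = 11 then -1 - ω else 0)
    + (if k = 1 then ω - 2 else 0) := by
  have e : -1 - ω ^ 5 = ω - 2 := by rw [ω5]; ring
  unfold F12
  rw [e]
  by_cases h0 : k = 0
  · subst h0; simp
  by_cases h1 : k = 11
  · subst h1; simp
  simp [h0, h1]

lemma e0 : ∀ a b : Fin 12, a - b = 0 ↔ b = a := by decide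
lemma e11 : ∀ a b : Fin 12, a - b = 11 ↔ b = a + 1 := by decide
lemma e1 : ∀ a b : Fin 12, a - b = 1 ↔ b = a - 1 := by decide
lemma f0 : ∀ a b : Fin 12, a - b = 0 ↔ a = b := by decide
lemma f11 : ∀ a b : Fin 12, a - b = 11 ↔ a = b - 1 := by decide
lemma f1 : ∀ a b : Fin 12, a - b = 1 ↔ a = b + 1 := by decide

lemma F12_sum (f : Fin 12 → O) (a : Fin 12) :
    ∑ b, f b * F12 (a - b) = 3 * f a + (-1 - ω) * f (a + 1) + (ω - 2) * f (a - 1) := by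
  simp only [F12_eq, e0, e11, e1, mul_add, Finset.sum_add_distrib, mul_ite, mul_zero,
    Finset.sum_ite_eq', Finset.mem_univ, if_true]
  ring

lemma F12_sum' (f : Fin 12 → O) (b : Fin 12) :
    ∑ a, f a * F12 (a - b) = 3 * f b + (-1 - ω) * f (b - 1) + (ω - 2) * f (b + 1) := by
  simp only [F12_eq, f0, f11, f1, mul_add, Finset.sum_add_distrib, mul_ite, mul_zero,
    Finset.sum_ite_eq', Finset.mem_univ, if_true]
  ring

lemma psi0_eq (x y : B12) : psi0 x y = ∑ a, x a *
    (3 * conj (y a) + (-1 - ω) * conj (y (a + 1)) + (ω - 2) * conj (y (a - 1))) := by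
  unfold psi0
  refine Finset.sum_congr rfl fun a _ => ?_
  rw [← F12_sum (fun b => conj (y b)) a, Finset.mul_sum]
  exact Finset.sum_congr rfl fun b _ => by ring

lemma psi0_eq' (x y : B12) : psi0 x y = ∑ b, conj (y b) *
    (3 * x b + (-1 - ω) * x (b - 1) + (ω - 2) * x (b + 1)) := by
  unfold psi0
  rw [Finset.sum_comm]
  refine Finset.sum_congr rfl fun a _ => ?_
  rw [← F12_sum' x a, Finset.mul_sum]
  exact Finset.sum_congr rfl fun b _ => by ring

lemma σ₂_add (a : Fin 12) : σ₂ (a + 1) = ω * σ₂ a := by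
  have h : ∀ a : Fin 12, ((a + 1 : Fin 12) : ℕ) = a + 1 ∨
      ((a + 1 : Fin 12) : ℕ) = 0 ∧ (a : ℕ) = 11 := by decide
  unfold σ₂
  rcases h a with h | ⟨h, h'⟩
  · rw [h, pow_succ, mul_comm]
  · rw [h, h', ω11]; linear_combination ω_sq

lemma σ₂_sub (a : Fin 12) : σ₂ (a - 1) = (1 - ω) * σ₂ a := by
  have h := σ₂_add (a - 1)
  rw [sub_add_cancel] at h
  rw [h]; linear_combination (-σ₂ (a - 1)) * ω_sq * (-1)

lemma rad (n : B12) (hn : n ∈ N) (x : B12) : psi0 x n = 0 ∧ psi0 n x = 0 := by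
  obtain ⟨p, q, rfl⟩ := Submodule.mem_span_pair.1 hn
  constructor
  · rw [psi0_eq]
    refine Finset.sum_eq_zero fun a _ => ?_
    simp only [Pi.add_apply, Pi.smul_apply, smul_eq_mul, σ₂_add, σ₂_sub, map_add, map_mul,
      map_sub, map_one, conj_ω, σ₁]
    linear_combination (x a * conj q * conj (σ₂ a)) * 2 * ω_sq
  · rw [psi0_eq']
    refine Finset.sum_eq_zero fun a _ => ?_
    simp only [Pi.add_apply, Pi.smul_apply, smul_eq_mul, σ₂_add, σ₂_sub, σ₁]
    linear_combination (conj (x a) * q * (σ₂ a)) * 2 * ω_sq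

lemma psi0_sub_left (x y z : B12) : psi0 (x - y) z = psi0 x z - psi0 y z := by
  simp only [psi0_eq, ← Finset.sum_sub_distrib]
  exact Finset.sum_congr rfl fun b _ => by simp only [Pi.sub_apply]; ring

lemma psi0_sub_right (x y z : B12) : psi0 x (y - z) = psi0 x y - psi0 x z := by
  simp only [psi0_eq', ← Finset.sum_sub_distrib]
  exact Finset.sum_congr rfl fun b _ => by simp only [Pi.sub_apply, map_sub]; ring

lemma psi0_S (x y : B12) : psi0 (S x) (S y) = psi0 x y := by
  rw [psi0_eq, psi0_eq]
  refine Fintype.sum_equiv (Equiv.subRight 1) _ _ fun a => ?_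
  simp only [S, Equiv.subRight_apply, sub_add_cancel, add_sub_cancel_right]

lemma psi0_single (a b : Fin 12) (u v : O) :
    psi0 (u • ηpow a) (v • ηpow b) = u * conj v * F12 (a - b) := by
  unfold psi0
  rw [Finset.sum_eq_single a, Finset.sum_eq_single b]
  · simp [ηpow]
  · intro c _ hc; simp [ηpow, hc]
  · simp
  · intro c _ hc; simp [ηpow, hc]
  · simp

lemma ω_ne : ω * (1 - ω) = 1 := by linear_combination -ω_sq

lemma pow_inv (k : ℕ) : ω ^ k * (1 - ω) ^ k = 1 := by rw [← mul_pow, ω_ne, one_pow]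

lemma sB_sum (c : Fin 10 → O) : ∑ i, c i • sB i =
    mkA (∑ i : Fin 10, (c i * ω ^ (2 * ((i : ℕ) + 1))) •
      ηpow (Fin.castLE (by omega) i.succ)) := by
  change _ = N.mkQ _
  rw [map_sum]
  refine Finset.sum_congr rfl fun i _ => ?_
  rw [mul_smul, map_smul]; rfl

lemma ηsum_apply (c : Fin 10 → O) (a : Fin 12) :
    (∑ i : Fin 10, c i • ηpow (Fin.castLE (by omega) i.succ)) a =
      if h : a.val - 1 < 10 ∧ a ≠ 0 then c ⟨a.val - 1, h.1⟩ else 0 := by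
  rw [Finset.sum_apply]
  simp only [Pi.smul_apply, smul_eq_mul, ηpow, Pi.single_apply, mul_ite, mul_one, mul_zero]
  split_ifs with h
  · rw [Finset.sum_eq_single ⟨a.val - 1, h.1⟩]
    · rw [if_pos]
      have := h.2
      simp only [ne_eq, Fin.ext_iff, Fin.val_zero] at this
      simp [Fin.ext_iff]; omega
    · intro b _ hb
      rw [if_neg]
      simp only [ne_eq, Fin.ext_iff] at hb ⊢
      simp; omega
    · simp
  · refine Finset.sum_eq_zero fun b _ => ?_
    rw [if_neg]
    intro hab
    apply h
    subst hab
    refine ⟨b.isLt, fun h => ?_⟩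
    have := congrArg Fin.val h
    simp at this

lemma sB_li : LinearIndependent O sB := by
  rw [Fintype.linearIndependent_iff]
  intro c hc i
  rw [sB_sum] at hc
  have hc := (Submodule.Quotient.mk_eq_zero N).1 hc
  obtain ⟨p, q, h⟩ := Submodule.mem_span_pair.1 hc
  have h0 := congrFun h 0
  have h11 := congrFun h 11
  have hi := congrFun h (Fin.castLE (by omega) i.succ)
  rw [ηsum_apply] at h0 h11 hi
  simp [σ₁, σ₂, ω11] at h0 h11
  have hq : q = 0 := by linear_combination (-(1-ω)) * (h11 - h0) + (-q) * ω_ne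
  have hp : p = 0 := by linear_combination h0 - hq
  subst hq hp
  rw [dif_pos ⟨i.isLt, fun h => by simpa using congrArg Fin.val h⟩] at hi
  have hi : 0 = c i * ω ^ (2 * ((i : ℕ) + 1)) := by simpa using hi
  linear_combination -(1 - ω) ^ (2 * ((i : ℕ) + 1)) * hi - c i * pow_inv (2 * ((i : ℕ) + 1))

lemma sB_span : Submodule.span O (Set.range sB) = ⊤ := by
  rw [eq_top_iff]
  rintro u -
  obtain ⟨y, rfl⟩ := Submodule.Quotient.mk_surjective N u
  rw [Submodule.mem_span_range_iff_exists_fun]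
  let q : O := (1 - ω) * (y 0 - y 11)
  let p : O := y 0 - q
  let z : B12 := y - (p • σ₁ + q • σ₂)
  refine ⟨fun i => (1 - ω) ^ (2 * ((i : ℕ) + 1)) * z (Fin.castLE (by omega) i.succ), ?_⟩
  rw [sB_sum]
  refine Eq.trans (b := mkA z) ?_ ?_
  · congr 1
    ext a
    rw [ηsum_apply]
    split_ifs with h
    · have e : (Fin.castLE (by omega) (Fin.succ (⟨a.val - 1, h.1⟩ : Fin 10)) : Fin 12) = a := by
        have := h.2
        simp only [ne_eq, Fin.ext_iff, Fin.val_zero] at this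
        simp [Fin.ext_iff]; omega
      rw [e]
      linear_combination z a * pow_inv (2 * ((a.val - 1) + 1))
    · have : a = 0 ∨ a = 11 := by
        simp only [ne_eq, Fin.ext_iff, Fin.val_zero, not_and, not_not] at h ⊢
        have : ((11 : Fin 12) : ℕ) = 11 := rfl
        omega
      rcases this with rfl | rfl
      · simp [z, p, σ₁, σ₂]
      · simp [z, p, q, σ₁, σ₂, ω11]
        linear_combination -(y 0 - y 11) * ω_ne
  · refine (Submodule.Quotient.eq N).2 ?_
    have : z - y = -(p • σ₁ + q • σ₂) := by simp [z]
    rw [this]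
    exact N.neg_mem (Submodule.mem_span_pair.2 ⟨p, q, rfl⟩)

lemma mk_out (x : B12) : (Quotient.out (mkA x) - x) ∈ N :=
  (Submodule.Quotient.eq N).1 (Quotient.out_eq (mkA x))

lemma far : ∀ i j : Fin 10, (i : ℕ) + 1 < (j : ℕ) →
          (Fin.castLE (by omega) i.succ - Fin.castLE (by omega) j.succ : Fin 12) ≠ 0 ∧
          (Fin.castLE (by omega) i.succ - Fin.castLE (by omega) j.succ : Fin 12) ≠ 11 ∧
          (Fin.castLE (by omega) i.succ - Fin.castLE (by omega) j.succ : Fin 12) ≠ 1 := by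
        decide

/-- The ideal `(h)` of `𝒪[η]/(η¹² − 1)` lies in the radical of `ψ₀`, so
`ψ₀` induces a Hermitian form `ψ` on `A_𝒪 = 𝒪[η]/(h)`, for which multiplication by `η`
is unitary.  Moreover the images `s₁, …, s₁₀` of `(ω²η)¹, …, (ω²η)¹⁰` form an 𝒪-basis
of `A_𝒪` with `ψ(sᵢ,sᵢ) = 3`, `ψ(sᵢ,sᵢ₊₁) = θ` and `ψ(sᵢ,sⱼ) = 0` for `j > i + 1`;
that is, `(A_𝒪, ψ)` is isomorphic as a Hermitian 𝒪-lattice to `Λ¹⁰`. -/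
theorem statement14 :
    (∀ n ∈ N, ∀ x : B12, psi0 x n = 0 ∧ psi0 n x = 0) ∧
    (∃ ψA : A12 → A12 → O, ∀ x y : B12, ψA (mkA x) (mkA y) = psi0 x y) ∧
    (∀ ψA : A12 → A12 → O, (∀ x y : B12, ψA (mkA x) (mkA y) = psi0 x y) →
      (∀ x y : B12, ψA (mkA (S x)) (mkA (S y)) = ψA (mkA x) (mkA y)) ∧
      LinearIndependent O sB ∧
      Submodule.span O (Set.range sB) = ⊤ ∧
      (∀ i : Fin 10, ψA (sB i) (sB i) = 3) ∧
      (∀ i j : Fin 10, (i : ℕ) + 1 = (j : ℕ) → ψA (sB i) (sB j) = θ) ∧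
      (∀ i j : Fin 10, (i : ℕ) + 1 < (j : ℕ) → ψA (sB i) (sB j) = 0)) := by
  refine ⟨rad, ⟨fun u v => psi0 (Quotient.out u) (Quotient.out v), fun x y => ?_⟩, ?_⟩
  · have h1 := (rad _ (mk_out x) (Quotient.out (mkA y))).2
    have h2 := (rad _ (mk_out y) x).1
    rw [psi0_sub_left] at h1
    rw [psi0_sub_right] at h2
    linear_combination h1 + h2
  · intro ψA h
    have key : ∀ i j : Fin 10, ψA (sB i) (sB j) = ω ^ (2 * ((i : ℕ) + 1)) *
        (1 - ω) ^ (2 * ((j : ℕ) + 1)) * F12 (Fin.castLE (by omega) i.succ -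
          Fin.castLE (by omega) j.succ) := by
      intro i j
      unfold sB
      rw [h, psi0_single, map_pow, conj_ω]
    refine ⟨fun x y => by rw [h, h, psi0_S], sB_li, sB_span, ?_, ?_, ?_⟩
    · intro i
      rw [key, pow_inv, sub_self]
      simp [F12]
    · intro i j hij
      have e : (Fin.castLE (by omega) i.succ - Fin.castLE (by omega) j.succ : Fin 12) = 11 := by
        revert i j; decide
      rw [key, e, ← hij, θ, conj_ω]
      have h1 := pow_inv (2 * ((i : ℕ) + 1))
      have : F12 11 = -1 - ω := by simp [F12]
      rw [this, show 2 * ((i : ℕ) + 1 + 1) = 2 * ((i : ℕ) + 1) + 2 by ring, pow_add]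
      linear_combination (1 - ω) ^ 2 * (-1 - ω) * h1 + (-ω) * ω_sq
    · intro i j hij
      obtain ⟨a, b, c⟩ := far i j hij
      rw [key]
      simp only [F12, if_neg a, if_neg b, if_neg c, mul_zero]

end
end

section
/- With T̂ₖ(x) := x − (1/3)(1 + ω)·ψ(x, ηᵏ)·ηᵏ for k ∈ ℤ/12, the composite T̂₁ ∘ T̂₂ ∘ ⋯ ∘ T̂₁₁ equals multiplication by ωη on A_𝒪, and the composite T̂₁₁ ∘ T̂₁₀ ∘ ⋯ ∘ T̂₁ equals multiplication by η⁻¹ = η¹¹ on A_𝒪. -/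
open Polynomial

noncomputable section

/-- Multiplication by `η⁻¹ = η¹¹` on `𝒪[η]/(η¹² − 1)`: the inverse cyclic shift. -/
def Sinv (x : B12) : B12 := fun a => x (a + 1)

lemma conj_zero_one (k b : Fin 12) : conj (ηpow k b) = if b = k then 1 else 0 := by
  by_cases h : b = k
  · subst h; simp [ηpow]
  · simp [ηpow, h]

lemma psi0_eta (x : B12) (k : Fin 12) :
    psi0 x (ηpow k) = ∑ a : Fin 12, x a * F12 (a - k) := by
  unfold psi0
  refine Finset.sum_congr rfl fun a _ => ?_
  simp only [conj_zero_one]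
  simp

lemma psi0_eta_eval (x : B12) (k : Fin 12) :
    psi0 x (ηpow k) = 3 * x k + (-1 - ω) * x (k - 1) + (-1 - ω ^ 5) * x (k + 1) := by
  rw [psi0_eta, ← Equiv.sum_comp (Equiv.addRight k)]
  simp only [Equiv.coe_addRight, add_sub_cancel_right]
  rw [Fin.sum_univ_succ, Fin.sum_univ_succ, Fin.sum_univ_castSucc]
  rw [Finset.sum_eq_zero]
  · have h1 : (Fin.last 9).succ.succ + k = k - 1 := by
      rw [show ((Fin.last 9).succ.succ : Fin 12) = -1 by decide, neg_add_eq_sub]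
    have h2 : (0 : Fin 11).succ + k = k + 1 := by
      rw [show ((0 : Fin 11).succ : Fin 12) = 1 by decide]; exact add_comm 1 k
    have e1 : F12 ((Fin.last 9).succ.succ) = -1 - ω := by
      unfold F12; rw [if_neg (by decide), if_pos (by decide)]
    have e2 : F12 ((0 : Fin 11).succ) = -1 - ω ^ 5 := by
      unfold F12; rw [if_neg (by decide), if_neg (by decide), if_pos (by decide)]
    have e0 : F12 0 = 3 := by
      unfold F12; rw [if_pos rfl]
    rw [h1, h2, e1, e2, e0, zero_add]
    ring
  · intro i _
    have : F12 (i.castSucc.succ.succ) = 0 := by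
      unfold F12
      rw [if_neg, if_neg, if_neg] <;> revert i <;> decide
    rw [this, mul_zero]

lemma step_T (ψA : A12 → A12 → O) (hψA : ∀ x y : B12, ψA (mkA x) (mkA y) = psi0 x y)
    (T : Fin 12 → A12 → A12)
    (hT : ∀ (k : Fin 12) (x : A12) (c : O),
      (1 + ω) * ψA x (mkA (ηpow k)) = 3 * c → T k x = x - c • mkA (ηpow k))
    (k : Fin 12) (x y : B12) (hk : y k = -ω * x k + ω * x (k - 1) + x (k + 1))
    (hy : ∀ a, a ≠ k → y a = x a) : T k (mkA x) = mkA y := by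
  rw [hT k (mkA x) ((1 + ω) * x k - ω * x (k - 1) - x (k + 1))]
  · have : y = x - ((1 + ω) * x k - ω * x (k - 1) - x (k + 1)) • ηpow k := by
      funext a
      by_cases h : a = k
      · subst h
        simp [ηpow, hk]; ring
      · simp [ηpow, h, hy a h]
    rw [this]; rfl
  · rw [hψA, psi0_eta_eval]
    have h := ω_sq
    linear_combination (-x (k - 1) - x (k + 1) * (ω ^ 4 + 2 * ω ^ 3 + ω ^ 2 - ω - 2)) * h

def Y1 (x : B12) (j : ℕ) : B12 := fun a =>
  if j ≤ (a : ℕ) then -ω * x 11 + ω * x (a - 1) + x 0 else x a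

def Y2 (x : B12) (j : ℕ) : B12 := fun a =>
  if 1 ≤ (a : ℕ) ∧ (a : ℕ) ≤ j then x (a + 1) + ω ^ (a : ℕ) * (x 0 - x 1) else x a

lemma fin12_ne {a k : Fin 12} (h : a ≠ k) : (a : ℕ) ≠ (k : ℕ) := fun e => h (Fin.ext e)

lemma Y1_hy (x : B12) (k : Fin 12) (a : Fin 12) (h : a ≠ k) :
    Y1 x k a = Y1 x ((k : ℕ) + 1) a := by
  have := fin12_ne h
  unfold Y1
  congr 1
  apply propext; omega

lemma Y2_hy (x : B12) (k j : ℕ) (hj : k = j + 1) (a : Fin 12) (h : (a : ℕ) ≠ k) :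
    Y2 x k a = Y2 x j a := by
  unfold Y2
  congr 1
  apply propext; omega

lemma Y1_hk (x : B12) (k : Fin 12) (h : k ≠ 0) :
    Y1 x k k = -ω * Y1 x ((k : ℕ) + 1) k + ω * Y1 x ((k : ℕ) + 1) (k - 1)
      + Y1 x ((k : ℕ) + 1) (k + 1) := by
  fin_cases k
  · exact absurd rfl h
  all_goals (simp [Y1]; try ring)

lemma Y2_hk (x : B12) (j : ℕ) (k : Fin 12) (hj : (k : ℕ) = j + 1) :
    Y2 x k k = -ω * Y2 x j k + ω * Y2 x j (k - 1) + Y2 x j (k + 1) := by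
  fin_cases k
  · simp at hj
  all_goals
    obtain rfl : j = _ := (Nat.succ.inj hj).symm
    simp [Y2]; try ring

lemma mkA_eq (x y : B12) (h : x - y ∈ N) : mkA x = mkA y :=
  (Submodule.Quotient.eq N).2 h

lemma Y1_end (x : B12) : mkA (Y1 x 1) = ω • mkA (S x) := by
  change _ = mkA (ω • S x)
  apply mkA_eq
  have : Y1 x 1 - ω • S x = (x 0 - ω * x 11) • σ₁ := by
    funext a
    fin_cases a <;> simp [Y1, S, σ₁] <;> first | rfl | ring
  rw [this]
  exact N.smul_mem _ (Submodule.subset_span (by simp))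

lemma Y2_end (x : B12) : mkA (Y2 x 11) = mkA (Sinv x) := by
  apply mkA_eq
  have : Y2 x 11 - Sinv x = (x 0 - x 1) • σ₂ := by
    funext a
    fin_cases a <;> simp [Y2, Sinv, σ₂] <;> try ring
  rw [this]
  exact N.smul_mem _ (Submodule.subset_span (by simp))

/-- With `T̂ₖ(x) := x − (1/3)(1 + ω)·ψ(x, ηᵏ)·ηᵏ`, the composite
`T̂₁ ∘ T̂₂ ∘ ⋯ ∘ T̂₁₁` equals multiplication by `ωη` on `A_𝒪`, and the composite
`T̂₁₁ ∘ T̂₁₀ ∘ ⋯ ∘ T̂₁` equals multiplication by `η⁻¹ = η¹¹` on `A_𝒪`.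
(`T̂ₖ` is characterized denominator-freely by: `T̂ₖ x = x − c • ηᵏ` whenever
`(1 + ω)·ψ(x, ηᵏ) = 3c`; multiplication by `η` on `A_𝒪` is induced by the shift `S`.) -/
theorem statement16
    (ψA : A12 → A12 → O) (hψA : ∀ x y : B12, ψA (mkA x) (mkA y) = psi0 x y)
    (T : Fin 12 → A12 → A12)
    (hT : ∀ (k : Fin 12) (x : A12) (c : O),
      (1 + ω) * ψA x (mkA (ηpow k)) = 3 * c → T k x = x - c • mkA (ηpow k)) :
    (∀ x : B12,
      T 1 (T 2 (T 3 (T 4 (T 5 (T 6 (T 7 (T 8 (T 9 (T 10 (T 11 (mkA x))))))))))) =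
        ω • mkA (S x)) ∧
    (∀ x : B12,
      T 11 (T 10 (T 9 (T 8 (T 7 (T 6 (T 5 (T 4 (T 3 (T 2 (T 1 (mkA x))))))))))) =
        mkA (Sinv x)) := by
  have s1 : ∀ (x : B12) (k : Fin 12), k ≠ 0 →
      T k (mkA (Y1 x ((k : ℕ) + 1))) = mkA (Y1 x k) := fun x k h =>
    step_T ψA hψA T hT k _ _ (Y1_hk x k h) (Y1_hy x k)
  have s2 : ∀ (x : B12) (k : Fin 12) (j : ℕ), (k : ℕ) = j + 1 →
      T k (mkA (Y2 x j)) = mkA (Y2 x k) := fun x k j h =>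
    step_T ψA hψA T hT k _ _ (Y2_hk x j k h) (fun a ha => Y2_hy x k j h a (fin12_ne ha))
  constructor
  · intro x
    have e : x = Y1 x 12 := by
      funext a
      have := a.isLt
      unfold Y1
      rw [if_neg (by omega)]
    rw [← Y1_end]
    conv_lhs => rw [e]
    rw [show T 11 (mkA (Y1 x 12)) = mkA (Y1 x 11) from s1 x 11 (by decide)]
    rw [show T 10 (mkA (Y1 x 11)) = mkA (Y1 x 10) from s1 x 10 (by decide)]
    rw [show T 9 (mkA (Y1 x 10)) = mkA (Y1 x 9) from s1 x 9 (by decide)]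
    rw [show T 8 (mkA (Y1 x 9)) = mkA (Y1 x 8) from s1 x 8 (by decide)]
    rw [show T 7 (mkA (Y1 x 8)) = mkA (Y1 x 7) from s1 x 7 (by decide)]
    rw [show T 6 (mkA (Y1 x 7)) = mkA (Y1 x 6) from s1 x 6 (by decide)]
    rw [show T 5 (mkA (Y1 x 6)) = mkA (Y1 x 5) from s1 x 5 (by decide)]
    rw [show T 4 (mkA (Y1 x 5)) = mkA (Y1 x 4) from s1 x 4 (by decide)]
    rw [show T 3 (mkA (Y1 x 4)) = mkA (Y1 x 3) from s1 x 3 (by decide)]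
    rw [show T 2 (mkA (Y1 x 3)) = mkA (Y1 x 2) from s1 x 2 (by decide)]
    rw [show T 1 (mkA (Y1 x 2)) = mkA (Y1 x 1) from s1 x 1 (by decide)]
  · intro x
    have e : x = Y2 x 0 := by
      funext a
      unfold Y2
      rw [if_neg (by omega)]
    rw [← Y2_end]
    conv_lhs => rw [e]
    rw [show T 1 (mkA (Y2 x 0)) = mkA (Y2 x 1) from s2 x 1 0 rfl]
    rw [show T 2 (mkA (Y2 x 1)) = mkA (Y2 x 2) from s2 x 2 1 rfl]
    rw [show T 3 (mkA (Y2 x 2)) = mkA (Y2 x 3) from s2 x 3 2 rfl]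
    rw [show T 4 (mkA (Y2 x 3)) = mkA (Y2 x 4) from s2 x 4 3 rfl]
    rw [show T 5 (mkA (Y2 x 4)) = mkA (Y2 x 5) from s2 x 5 4 rfl]
    rw [show T 6 (mkA (Y2 x 5)) = mkA (Y2 x 6) from s2 x 6 5 rfl]
    rw [show T 7 (mkA (Y2 x 6)) = mkA (Y2 x 7) from s2 x 7 6 rfl]
    rw [show T 8 (mkA (Y2 x 7)) = mkA (Y2 x 8) from s2 x 8 7 rfl]
    rw [show T 9 (mkA (Y2 x 8)) = mkA (Y2 x 9) from s2 x 9 8 rfl]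
    rw [show T 10 (mkA (Y2 x 9)) = mkA (Y2 x 10) from s2 x 10 9 rfl]
    rw [show T 11 (mkA (Y2 x 10)) = mkA (Y2 x 11) from s2 x 11 10 rfl]

end
end

section
/- Let u := Σₖ₌₀¹¹ (−η)ᵏ ∈ A_𝒪 (note −1 = ω³, so u is the image of Σₖ₌₀¹¹ (ω³η)ᵏ). Then ψ(u, u) = 72, and u is divisible by 2θ in A_𝒪; consequently u = 2θ·z for an element z ∈ A_𝒪 with ψ(z, z) = 6 (a 6-vector of A_𝒪). -/
open Polynomial

noncomputable section

/-- Let `u := Σₖ₌₀¹¹ (−η)ᵏ ∈ A_𝒪` (note `−1 = ω³`).  Then `ψ(u,u) = 72`,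
and `u` is divisible by `2θ` in `A_𝒪`: `u = 2θ·z` for some `z ∈ A_𝒪` with `ψ(z,z) = 6`
(a 6-vector of `A_𝒪`). -/
theorem statement17
    (ψA : A12 → A12 → O) (hψA : ∀ x y : B12, ψA (mkA x) (mkA y) = psi0 x y) :
    let u : A12 := mkA (fun a => (-1 : O) ^ (a : ℕ))
    ψA u u = 72 ∧ ∃ z : A12, u = (2 * θ) • z ∧ ψA z z = 6 := by
  have h := ω_sq
  have hc : conj ω = 1 - ω := by
    unfold conj
    exact AdjoinRoot.lift_root _
  have hθ : θ = 2 * ω - 1 := by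
    unfold θ
    rw [hc]
    ring
  have h2 : ω ^ 2 = ω - 1 := by linear_combination h
  have h3 : ω ^ 3 = -1 := by linear_combination (ω + 1) * h
  have h4 : ω ^ 4 = -ω := by linear_combination ω * h3
  have h5 : ω ^ 5 = 1 - ω := by linear_combination ω ^ 2 * h3 - h2
  have h6 : ω ^ 6 = 1 := by linear_combination (ω ^ 3 - 1) * h3
  have h7 : ω ^ 7 = ω := by linear_combination ω * h6
  have h8 : ω ^ 8 = ω - 1 := by linear_combination ω ^ 2 * h6 + h2
  have h9 : ω ^ 9 = -1 := by linear_combination ω ^ 3 * h6 + h3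
  have h10 : ω ^ 10 = -ω := by linear_combination ω ^ 4 * h6 + h4
  have h11 : ω ^ 11 = 1 - ω := by linear_combination ω ^ 5 * h6 + h5
  have key : ∀ x : B12, psi0 x x = ∑ a : Fin 12, x a * (3 * conj (x a)
      + (-1 - ω) * conj (x (a + 1)) + (-2 + ω) * conj (x (a - 1))) := by
    intro x
    unfold psi0
    refine Finset.sum_congr rfl fun a _ => ?_
    have hF : ∀ b : Fin 12, F12 (a - b) = (if b = a then 3 else 0)
        + (if b = a + 1 then (-1 - ω) else 0) + (if b = a - 1 then (-2 + ω) else 0) := by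
      intro b
      have e0 : a - b = 0 ↔ b = a := by revert a b; decide
      have e1 : a - b = 11 ↔ b = a + 1 := by revert a b; decide
      have e2 : a - b = 1 ↔ b = a - 1 := by revert a b; decide
      have d1 : a + 1 ≠ a := by clear * -; revert a; decide
      have d2 : a - 1 ≠ a := by clear * -; revert a; decide
      have d3 : a - 1 ≠ a + 1 := by clear * -; revert a; decide
      simp only [F12, e0, e1, e2, h5]
      by_cases c0 : b = a
      · subst c0
        simp [d1.symm, d2.symm]
      by_cases c1 : b = a + 1
      · subst c1
        simp [d1, d3.symm]
      by_cases c2 : b = a - 1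
      · subst c2
        simp [d2, d3]
        ring
      simp [c0, c1, c2]
    simp only [hF, mul_add, Finset.sum_add_distrib, mul_ite, mul_zero, Finset.sum_ite_eq',
      Finset.sum_ite_eq, Finset.mem_univ, if_true]
    ring
  intro u
  refine ⟨?_, mkA ![1 - ω, 1, 1, ω, 0, 0, 1 - ω, 1, 1, ω, 0, 0], ?_, ?_⟩
  · simp only [u]
    rw [hψA, key]
    have hs : ∀ a : Fin 12, (-1 : O) ^ (a : ℕ) * (3 * conj ((-1 : O) ^ (a : ℕ))
      + (-1 - ω) * conj ((-1 : O) ^ ((a + 1 : Fin 12) : ℕ))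
      + (-2 + ω) * conj ((-1 : O) ^ ((a - 1 : Fin 12) : ℕ))) = 6 := by
      intro a
      have e1 : (-1 : O) ^ ((a + 1 : Fin 12) : ℕ) = - (-1 : O) ^ (a : ℕ) := by
        fin_cases a <;> norm_num [Fin.val_add]
      have e2 : (-1 : O) ^ ((a - 1 : Fin 12) : ℕ) = - (-1 : O) ^ (a : ℕ) := by
        fin_cases a <;> norm_num [Fin.val_sub]
      have e3 : (-1 : O) ^ (a : ℕ) * (-1 : O) ^ (a : ℕ) = 1 := by
        rw [← mul_pow]
        simp
      rw [e1, e2]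
      simp only [map_neg, map_pow, map_one]
      linear_combination 6 * e3
    rw [Finset.sum_congr rfl fun a _ => hs a]
    simp
    norm_num
  · simp only [u]
    unfold mkA
    rw [← Submodule.Quotient.mk_smul, Submodule.Quotient.eq]
    have e : (fun a : Fin 12 => (-1 : O) ^ (a : ℕ)) - (2 * θ) •
        (![1 - ω, 1, 1, ω, 0, 0, 1 - ω, 1, 1, ω, 0, 0] : B12) = (-θ) • σ₁ + (-2 : O) • σ₂ := by
      funext a
      rw [hθ]
      fin_cases a <;> simp [σ₁, σ₂] <;> grind
    rw [e]
    exact N.add_mem (N.smul_mem _ (Submodule.subset_span (by simp)))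
      (N.smul_mem _ (Submodule.subset_span (by simp)))
  · rw [hψA, key]
    set z : B12 := ![1 - ω, 1, 1, ω, 0, 0, 1 - ω, 1, 1, ω, 0, 0] with hz
    have z0 : z 0 = 1 - ω := rfl
    have z1 : z 1 = 1 := rfl
    have z2 : z 2 = 1 := rfl
    have z3 : z 3 = ω := rfl
    have z4 : z 4 = 0 := rfl
    have z5 : z 5 = 0 := rfl
    have hp : ∀ a, z (a + 6) = z a := by
      intro a
      fin_cases a <;> rfl
    have hsum : ∀ f : Fin 12 → O, (∀ a, f (a + 6) = f a) →
        ∑ a, f a = 2 * (f 0 + f 1 + f 2 + f 3 + f 4 + f 5) := by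
      intro f hf
      rw [← hf 0, ← hf 1, ← hf 2, ← hf 3, ← hf 4, ← hf 5]
      have p0 := hf 0
      have p1 := hf 1
      have p2 := hf 2
      have p3 := hf 3
      have p4 := hf 4
      have p5 := hf 5
      simp only [Fin.sum_univ_succ, Fin.sum_univ_zero]
      change f 0 + (f 1 + (f 2 + (f 3 + (f 4 + (f 5 + (f 6 + (f 7 + (f 8 + (f 9 + (f 10 + (f 11 + 0))))))))))) = 2 * (f 6 + f 7 + f 8 + f 9 + f 10 + f 11)
      change f 6 = _ at p0
      change f 7 = _ at p1
      change f 8 = _ at p2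
      change f 9 = _ at p3
      change f 10 = _ at p4
      change f 11 = _ at p5
      rw [p0, p1, p2, p3, p4, p5]
      ring
    rw [hsum]
    · have w1 : z (0 - 1) = 0 := rfl
      have w2 : z (5 + 1) = 1 - ω := rfl
      have a0 : (0 : Fin 12) + 1 = 1 := rfl
      have a1 : (1 : Fin 12) + 1 = 2 := rfl
      have a2 : (2 : Fin 12) + 1 = 3 := rfl
      have a3 : (3 : Fin 12) + 1 = 4 := rfl
      have a4 : (4 : Fin 12) + 1 = 5 := rfl
      have b1 : (1 : Fin 12) - 1 = 0 := rfl
      have b2 : (2 : Fin 12) - 1 = 1 := rfl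
      have b3 : (3 : Fin 12) - 1 = 2 := rfl
      have b4 : (4 : Fin 12) - 1 = 3 := rfl
      have b5 : (5 : Fin 12) - 1 = 4 := rfl
      simp only [w1, w2, a0, a1, a2, a3, a4, b1, b2, b3, b4, b5, z0, z1, z2, z3, z4, z5,
        map_sub, map_one, map_zero, hc]
      grind
    · intro a
      have c1 : a + 6 + 1 = (a + 1) + 6 := by clear * -; revert a; decide
      have c2 : a + 6 - 1 = (a - 1) + 6 := by clear * -; revert a; decide
      rw [c1, c2, hp, hp, hp]

end
end
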